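/- arXiv:2305.19046 — 2 statements merged into one kernel-verified Lean document; each statement's English description precedes it below -/
import Mathlib

section
/- Let 0 < γ < α < n/s and 1 < s < n/α. There exists a constant C = C(n, α, γ, s) > 0 such that for every real-valued function f and every x ∈ ℝ^n, M_{cap_{γ,s}} f(x) ≤ C (M_{cap_{α,s}} (|f|^{(n-αs)/(n-γs)})(x))^{(n-γs)/(n-αs)}. -/
open scoped ENNReal
open Metric Set MeasureTheory

noncomputable section

/-- `ℝⁿ` as Euclidean space. -/
abbrev Rn (n : ℕ) := EuclideanSpace ℝ (Fin n)

/-- The Choquet integral of a nonnegative function `g` with respect to a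
(monotone) set function `C`: `∫ g dC := ∫_0^∞ C({g > t}) dt`. -/
noncomputable def choquet {X : Type*} (C : Set X → ℝ≥0∞) (g : X → ℝ≥0∞) : ℝ≥0∞ :=
  ∫⁻ t in Ioi (0 : ℝ), C {x | ENNReal.ofReal t < g x}

/-- The Choquet integral of `g` restricted to a set `A`. -/
noncomputable def choquetOn {X : Type*} (C : Set X → ℝ≥0∞) (A : Set X) (g : X → ℝ≥0∞) : ℝ≥0∞ :=
  ∫⁻ t in Ioi (0 : ℝ), C {x | x ∈ A ∧ ENNReal.ofReal t < g x}

/-- The `L^∞(C)` norm: `inf {λ > 0 : C({|f| > λ}) = 0}` (formulated in `ℝ≥0∞`). -/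
noncomputable def choquetEssSup {X : Type*} (C : Set X → ℝ≥0∞) (f : X → ℝ) : ℝ≥0∞ :=
  sInf {l : ℝ≥0∞ | C {x | l < ENNReal.ofReal |f x|} = 0}

/-- `C`-quasicontinuity of a function `f`. -/
def QuasiCont {X : Type*} [TopologicalSpace X] (C : Set X → ℝ≥0∞) (f : X → ℝ) : Prop :=
  ∀ ε : ℝ≥0∞, 0 < ε → ∃ U : Set X, IsOpen U ∧ C U < ε ∧ ContinuousOn f Uᶜ

/-- Membership in the capacitary space `L^p(C)`: `C`-quasicontinuous with
finite `p`-th power Choquet integral. -/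
def MemChoquetLp {X : Type*} [TopologicalSpace X] (C : Set X → ℝ≥0∞) (p : ℝ) (f : X → ℝ) : Prop :=
  QuasiCont C f ∧ choquet C (fun x => ENNReal.ofReal |f x| ^ p) < ∞

/-- The constant `γ(α)` in the Riesz kernel `I_α = (1/γ(α)) |x|^{α-n}`. -/
noncomputable def rieszConst (n : ℕ) (α : ℝ) : ℝ :=
  Real.pi ^ ((n : ℝ) / 2) * 2 ^ α * Real.Gamma (α / 2) / Real.Gamma (((n : ℝ) - α) / 2)

/-- The Riesz potential `I_α * φ` of a nonnegative function `φ`. -/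
noncomputable def rieszPot (n : ℕ) (α : ℝ) (φ : Rn n → ℝ≥0∞) (x : Rn n) : ℝ≥0∞ :=
  ∫⁻ y, ENNReal.ofReal ((1 / rieszConst n α) * ‖x - y‖ ^ (α - (n : ℝ))) * φ y

/-- The Riesz capacity `cap_{α,s}(E) = inf {‖φ‖_{L^s}^s : φ ≥ 0, I_α*φ ≥ 1 on E}`. -/
noncomputable def rieszCap (n : ℕ) (α s : ℝ) (E : Set (Rn n)) : ℝ≥0∞ :=
  ⨅ (φ : Rn n → ℝ≥0∞) (_ : ∀ x ∈ E, 1 ≤ rieszPot n α φ x), ∫⁻ y, φ y ^ s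

/-- The capacitary maximal function associated to the Riesz capacity:
`M_{cap_{α,s}} g(x) := sup_{r>0} (1/(cap_{α,s}(B(0,1)) r^{n-αs})) ∫_{B(x,r)} g d cap_{α,s}`. -/
noncomputable def maximalCap (n : ℕ) (α s : ℝ) (g : Rn n → ℝ≥0∞) (x : Rn n) : ℝ≥0∞ :=
  ⨆ (r : ℝ) (_ : 0 < r),
    (rieszCap n α s (ball (0 : Rn n) 1) * ENNReal.ofReal (r ^ ((n : ℝ) - α * s)))⁻¹ *
      choquetOn (rieszCap n α s) (ball x r) g

/-- `Γ_{α,s}(g) := inf {‖φ‖_{L^s}^s : φ ≥ 0, I_α * φ ≥ g everywhere}`. -/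
noncomputable def rieszGammaFunc (n : ℕ) (α s : ℝ) (g : Rn n → ℝ≥0∞) : ℝ≥0∞ :=
  ⨅ (φ : Rn n → ℝ≥0∞) (_ : ∀ x, g x ≤ rieszPot n α φ x), ∫⁻ y, φ y ^ s

lemma lintegral_antitone_rpow_le {h : ℝ → ℝ≥0∞} (hh : Antitone h) {θ : ℝ} (hθ : 1 < θ) :
    ∫⁻ t in Ioi (0 : ℝ), h t ^ θ ≤
      ENNReal.ofReal θ * (∫⁻ τ in Ioi (0 : ℝ), h (τ ^ θ)) ^ θ := by
  have hθ0 : 0 < θ := one_pos.trans hθ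
  set J := ∫⁻ τ in Ioi (0 : ℝ), h (τ ^ θ) with hJ
  have hsplit (z : ℝ≥0∞) : z ^ θ = z ^ (θ - 1) * z := by
    conv_lhs => rw [← sub_add_cancel θ 1,
      ENNReal.rpow_add_of_nonneg _ _ (sub_pos.2 hθ).le zero_le_one, ENNReal.rpow_one]
  have himg : (fun τ : ℝ => τ ^ θ) '' Ioi 0 = Ioi 0 := by
    ext t
    constructor
    · rintro ⟨τ, hτ, rfl⟩
      exact Real.rpow_pos_of_pos hτ θ
    · intro ht
      exact ⟨t ^ θ⁻¹, Real.rpow_pos_of_pos ht _, Real.rpow_inv_rpow (le_of_lt ht) hθ0.ne'⟩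
  have hmono : MonotoneOn (fun τ : ℝ => τ ^ θ) (Ioi 0) := fun a ha b _ hab =>
    Real.rpow_le_rpow (le_of_lt ha) hab hθ0.le
  have hcv := lintegral_image_eq_lintegral_deriv_mul_of_monotoneOn (f := fun τ : ℝ => τ ^ θ)
    (f' := fun τ => θ * τ ^ (θ - 1)) measurableSet_Ioi
    (fun τ hτ => (Real.hasDerivAt_rpow_const (Or.inl (ne_of_gt hτ))).hasDerivWithinAt) hmono
    (fun t => h t ^ θ)
  rw [himg] at hcv
  rw [hcv]
  have hchebyshev : ∀ τ ∈ Ioi (0 : ℝ), ENNReal.ofReal τ * h (τ ^ θ) ≤ J := by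
    intro τ hτ
    calc ENNReal.ofReal τ * h (τ ^ θ) = ∫⁻ _ in Ioc 0 τ, h (τ ^ θ) := by
          simp [mul_comm]
      _ ≤ ∫⁻ u in Ioc 0 τ, h (u ^ θ) :=
          setLIntegral_mono' measurableSet_Ioc fun u hu =>
            hh (Real.rpow_le_rpow hu.1.le hu.2 hθ0.le)
      _ ≤ J := lintegral_mono_set Ioc_subset_Ioi_self
  calc ∫⁻ τ in Ioi (0 : ℝ), ENNReal.ofReal (θ * τ ^ (θ - 1)) * h (τ ^ θ) ^ θ
      ≤ ∫⁻ τ in Ioi (0 : ℝ), (ENNReal.ofReal θ * J ^ (θ - 1)) * h (τ ^ θ) := by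
        refine setLIntegral_mono' measurableSet_Ioi fun τ hτ => ?_
        rw [hsplit, ENNReal.ofReal_mul hθ0.le, ← ENNReal.ofReal_rpow_of_pos hτ, ← mul_assoc,
          mul_assoc (ENNReal.ofReal θ), ← ENNReal.mul_rpow_of_nonneg _ _ (by linarith)]
        gcongr
        exact hchebyshev τ hτ
    _ = ENNReal.ofReal θ * J ^ (θ - 1) * J := by
        refine lintegral_const_mul _ (hh.measurable.comp ?_)
        exact measurable_id.pow_const θ
    _ = ENNReal.ofReal θ * J ^ θ := by
        rw [hsplit, mul_assoc]

lemma setLIntegral_le_rpow_mul_measure_rpow {X : Type*} [MeasurableSpace X] (μ : Measure X)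
    {s : ℝ} (hs : 1 < s) (f : X → ℝ≥0∞) (B : Set X) :
    ∫⁻ y in B, f y ∂μ ≤ (∫⁻ y in B, f y ^ s ∂μ) ^ (1 / s) * μ B ^ (1 - 1 / s) := by
  obtain ⟨g, hg, hgf, hfg⟩ := exists_measurable_le_lintegral_eq (μ := μ.restrict B) f
  have hpq := Real.HolderConjugate.conjExponent hs
  have h := ENNReal.lintegral_mul_le_Lp_mul_Lq (μ.restrict B) hpq hg.aemeasurable
    (aemeasurable_const (b := (1 : ℝ≥0∞)))
  have hq : 1 / s.conjExponent = 1 - 1 / s := by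
    have := hpq.inv_add_inv_eq_one
    simp only [one_div]
    linarith
  simp only [Pi.mul_def, mul_one, ENNReal.one_rpow, lintegral_one, Measure.restrict_apply_univ,
    hq] at h
  rw [hfg]
  refine h.trans ?_
  gcongr with y
  exact hgf y

lemma rieszConst_pos {n : ℕ} {α : ℝ} (hα : 0 < α) (hαn : α < n) : 0 < rieszConst n α := by
  have h1 := Real.Gamma_pos_of_pos (half_pos hα)
  have h2 := Real.Gamma_pos_of_pos (half_pos (sub_pos.2 hαn))
  have := Real.pi_pos
  unfold rieszConst
  positivity

lemma volume_closedBall_Rn {n : ℕ} (x : Rn n) {t : ℝ} (ht : 0 ≤ t) :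
    volume (closedBall x t) =
      ENNReal.ofReal (volume.real (ball (0 : Rn n) 1) * t ^ (n : ℝ)) := by
  rw [Measure.addHaar_closedBall _ _ ht, ENNReal.ofReal_mul measureReal_nonneg,
    ofReal_measureReal measure_ball_lt_top.ne, mul_comm]
  simp

lemma volume_real_unitBall_pos (n : ℕ) : 0 < volume.real (ball (0 : Rn n) 1) :=
  ENNReal.toReal_pos (measure_ball_pos _ _ one_pos).ne' measure_ball_lt_top.ne

lemma lintegral_annulus_le {n : ℕ} {α s t a : ℝ} (hα : 0 < α) (hαn : α < n) (hs : 1 < s)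
    (ht : 0 < t) (ha : 0 ≤ a) {φ : Rn n → ℝ≥0∞} {x : Rn n}
    (h : ∫⁻ y in closedBall x t, φ y ^ s ≤ ENNReal.ofReal a) :
    ∫⁻ y in {y | t / 2 < ‖x - y‖ ∧ ‖x - y‖ ≤ t},
        ENNReal.ofReal ((1 / rieszConst n α) * ‖x - y‖ ^ (α - (n : ℝ))) * φ y ≤
      ENNReal.ofReal ((1 / rieszConst n α) * (t / 2) ^ (α - (n : ℝ)) *
        (a ^ (1 / s) * (volume.real (ball (0 : Rn n) 1) * t ^ (n : ℝ)) ^ (1 - 1 / s))) := by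
  have hc := rieszConst_pos hα hαn
  have hω := volume_real_unitBall_pos n
  have hs' : 1 / s < 1 := by rw [div_lt_one] <;> linarith
  have hmeas : MeasurableSet {y : Rn n | t / 2 < ‖x - y‖ ∧ ‖x - y‖ ≤ t} :=
    (measurableSet_lt (f := fun _ => t / 2) (g := fun y => ‖x - y‖)
      (by fun_prop) (by fun_prop)).inter
      (measurableSet_le (f := fun y => ‖x - y‖) (g := fun _ => t) (by fun_prop) (by fun_prop))
  calc _ ≤ ∫⁻ y in {y | t / 2 < ‖x - y‖ ∧ ‖x - y‖ ≤ t},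
        ENNReal.ofReal ((1 / rieszConst n α) * (t / 2) ^ (α - (n : ℝ))) * φ y := by
        refine setLIntegral_mono' hmeas fun y hy => ?_
        gcongr ENNReal.ofReal (_ * ?_) * _
        exact Real.rpow_le_rpow_of_nonpos (half_pos ht) hy.1.le (by linarith)
    _ = ENNReal.ofReal ((1 / rieszConst n α) * (t / 2) ^ (α - (n : ℝ))) *
        ∫⁻ y in {y | t / 2 < ‖x - y‖ ∧ ‖x - y‖ ≤ t}, φ y :=
        lintegral_const_mul' _ _ ENNReal.ofReal_ne_top
    _ ≤ ENNReal.ofReal ((1 / rieszConst n α) * (t / 2) ^ (α - (n : ℝ))) *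
        ∫⁻ y in closedBall x t, φ y := by
        gcongr
        intro y hy
        rw [mem_closedBall', dist_eq_norm]
        exact hy.2
    _ ≤ _ := by
        rw [ENNReal.ofReal_mul (q := a ^ (1 / s) * _) (by positivity)]
        gcongr
        refine (setLIntegral_le_rpow_mul_measure_rpow _ hs φ _).trans ?_
        rw [ENNReal.ofReal_mul (by positivity),
          ← ENNReal.ofReal_rpow_of_nonneg ha (by positivity),
          ← ENNReal.ofReal_rpow_of_nonneg (by positivity) (by linarith),
          volume_closedBall_Rn x ht.le]
        gcongr

lemma iUnion_dyadic_annuli {n : ℕ} (x : Rn n) {R : ℝ} (hR : 0 < R) :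
    (⋃ k : ℤ, {y : Rn n | R * 2 ^ k / 2 < ‖x - y‖ ∧ ‖x - y‖ ≤ R * 2 ^ k}) = {x}ᶜ := by
  ext y
  simp only [mem_iUnion, mem_ofPred_eq, mem_compl_iff, mem_singleton_iff]
  constructor
  · rintro ⟨k, hk, -⟩ rfl
    rw [sub_self, norm_zero] at hk
    exact absurd hk (not_lt.2 (by positivity))
  · intro hy
    have hpos : 0 < ‖x - y‖ / R := div_pos (norm_pos_iff.2 (sub_ne_zero.2 (Ne.symm hy))) hR
    obtain ⟨k, hk1, hk2⟩ := exists_mem_Ioc_zpow hpos one_lt_two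
    refine ⟨k + 1, ?_, ?_⟩
    · rw [lt_div_iff₀ hR] at hk1
      rw [zpow_add₀ two_ne_zero, zpow_one]
      linarith
    · rw [div_le_iff₀ hR] at hk2
      linarith

lemma rieszPot_le_of_dyadic_energy {n : ℕ} {α s R c : ℝ} (hα : 0 < α) (hαn : α < n)
    (hs : 1 < s) (hR : 0 < R) (hc : 0 ≤ c) {w : ℤ → ℝ} (hw : ∀ k, 0 ≤ w k) (hws : Summable w)
    {φ : Rn n → ℝ≥0∞} {x : Rn n}
    (h : ∀ k : ℤ, ∫⁻ y in closedBall x (R * 2 ^ k), φ y ^ s ≤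
      ENNReal.ofReal (c * (R * 2 ^ k) ^ ((n : ℝ) - α * s) * w k ^ s)) :
    rieszPot n α φ x ≤ ENNReal.ofReal ((1 / rieszConst n α) * 2 ^ ((n : ℝ) - α) *
      volume.real (ball (0 : Rn n) 1) ^ (1 - 1 / s) * c ^ (1 / s) * ∑' k, w k) := by
  have hK := rieszConst_pos hα hαn
  have hω := volume_real_unitBall_pos n
  have hs0 : 0 < s := one_pos.trans hs
  have hterm (k : ℤ) :
      ∫⁻ y in {y | R * 2 ^ k / 2 < ‖x - y‖ ∧ ‖x - y‖ ≤ R * 2 ^ k},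
        ENNReal.ofReal ((1 / rieszConst n α) * ‖x - y‖ ^ (α - (n : ℝ))) * φ y ≤
      ENNReal.ofReal ((1 / rieszConst n α) * 2 ^ ((n : ℝ) - α) *
        volume.real (ball (0 : Rn n) 1) ^ (1 - 1 / s) * c ^ (1 / s) * w k) := by
    have ht : 0 < R * 2 ^ k := by positivity
    have hwk := hw k
    refine (lintegral_annulus_le hα hαn hs ht (by positivity) (h k)).trans_eq ?_
    congr 1
    generalize R * 2 ^ k = t at ht
    rw [Real.mul_rpow (x := c * t ^ ((n : ℝ) - α * s)) (by positivity) (by positivity),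
      Real.mul_rpow hc (by positivity), Real.mul_rpow hω.le (by positivity),
      Real.div_rpow ht.le zero_le_two, ← Real.rpow_mul hwk, ← Real.rpow_mul ht.le,
      ← Real.rpow_mul ht.le, mul_one_div_cancel hs0.ne', Real.rpow_one,
      div_eq_mul_inv (t ^ (α - (n : ℝ))), ← Real.rpow_neg zero_le_two, neg_sub]
    have hcancel : t ^ (α - (n : ℝ)) * t ^ (((n : ℝ) - α * s) * (1 / s)) *
        t ^ ((n : ℝ) * (1 - 1 / s)) = 1 := by
      rw [← Real.rpow_add ht, ← Real.rpow_add ht]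
      convert Real.rpow_zero t using 2
      field_simp
      ring
    linear_combination ((1 / rieszConst n α) * 2 ^ ((n : ℝ) - α) *
      volume.real (ball (0 : Rn n) 1) ^ (1 - 1 / s) * c ^ (1 / s) * w k) * hcancel
  calc rieszPot n α φ x
      = ∫⁻ y in ({x} : Set (Rn n))ᶜ,
          ENNReal.ofReal ((1 / rieszConst n α) * ‖x - y‖ ^ (α - (n : ℝ))) * φ y := by
        rw [rieszPot, ← lintegral_add_compl _ (measurableSet_singleton x)]
        simp [Real.zero_rpow (sub_neg.2 hαn).ne]
    _ ≤ ∑' k : ℤ, ENNReal.ofReal ((1 / rieszConst n α) * 2 ^ ((n : ℝ) - α) *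
        volume.real (ball (0 : Rn n) 1) ^ (1 - 1 / s) * c ^ (1 / s) * w k) := by
        rw [← iUnion_dyadic_annuli x hR]
        exact (lintegral_iUnion_le _ _).trans (ENNReal.tsum_le_tsum hterm)
    _ = _ := by
        rw [← tsum_mul_left, ENNReal.ofReal_tsum_of_nonneg _ (hws.mul_left _)]
        intro k
        have := hw k
        positivity

lemma summable_pow_natAbs {q : ℝ} (hq0 : 0 ≤ q) (hq1 : q < 1) :
    Summable fun k : ℤ => q ^ k.natAbs := by
  refine Summable.of_nat_of_neg ?_ ?_ <;>
    simpa using summable_geometric_of_lt_one hq0 hq1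

/-- Where the Riesz potential is at least one, some ball of controlled radius carries a
proportional share of the energy. -/
lemma exists_ball_energy_ge {n : ℕ} {α γ s : ℝ} (hα : 0 < α) (hγα : γ < α) (hs : 1 < s)
    (hαs : α * s < n) :
    ∃ c : ℝ, 0 < c ∧ ∀ (φ : Rn n → ℝ≥0∞) (x : Rn n) (R : ℝ), 0 < R →
      ∫⁻ y, φ y ^ s ≤ ENNReal.ofReal (c * R ^ ((n : ℝ) - α * s)) → 1 ≤ rieszPot n α φ x →
      ∃ t, 0 < t ∧ t ≤ R ∧ ENNReal.ofReal (c * t ^ ((n : ℝ) - γ * s)) ≤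
        ENNReal.ofReal (R ^ ((α - γ) * s)) * ∫⁻ y in closedBall x t, φ y ^ s := by
  have hs0 : 0 < s := one_pos.trans hs
  have hαn : α < n := by nlinarith
  have hK := rieszConst_pos hα hαn
  have hω := volume_real_unitBall_pos n
  set δ := min (α - γ) (((n : ℝ) - α * s) / s) with hδ
  have hδ0 : 0 < δ := lt_min (sub_pos.2 hγα) (div_pos (sub_pos.2 hαs) hs0)
  have hδ1 : δ ≤ α - γ := min_le_left _ _
  have hδ2 : δ * s ≤ (n : ℝ) - α * s := (le_div_iff₀ hs0).1 (min_le_right _ _)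
  set q : ℝ := 2 ^ (-δ) with hq
  have hq0 : 0 < q := by positivity
  have hq1 : q < 1 := Real.rpow_lt_one_of_one_lt_of_neg one_lt_two (neg_neg_of_pos hδ0)
  set W := ∑' k : ℤ, q ^ k.natAbs with hW
  have hW0 : 0 ≤ W := tsum_nonneg fun k => by positivity
  set D := (1 / rieszConst n α) * 2 ^ ((n : ℝ) - α) *
    volume.real (ball (0 : Rn n) 1) ^ (1 - 1 / s) with hD
  have hD0 : 0 < D := by positivity
  have hqpow (k : ℤ) : (q ^ k.natAbs) ^ s = 2 ^ (-(δ * s * |(k : ℝ)|)) := by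
    rw [hq, ← Real.rpow_natCast, ← Real.rpow_mul zero_le_two, ← Real.rpow_mul zero_le_two,
      Nat.cast_natAbs, Int.cast_abs]
    ring_nf
  refine ⟨(D * W + 1) ^ (-s), by positivity, fun φ x R hR hφ hpot => ?_⟩
  set c := (D * W + 1) ^ (-s) with hc
  have hc0 : 0 < c := by positivity
  by_contra! hcon
  have hdyadic : ∀ k : ℤ, ∫⁻ y in closedBall x (R * 2 ^ k), φ y ^ s ≤
      ENNReal.ofReal (c * (R * 2 ^ k) ^ ((n : ℝ) - α * s) * (q ^ k.natAbs) ^ s) := by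
    intro k
    have hzpow : (2 : ℝ) ^ k = 2 ^ (k : ℝ) := (Real.rpow_intCast 2 k).symm
    rw [hqpow]
    rcases le_or_gt k 0 with hk | hk
    · have hkR : (k : ℝ) ≤ 0 := by exact_mod_cast hk
      have ht : 0 < R * 2 ^ k := by positivity
      have htR : R * 2 ^ k ≤ R := mul_le_of_le_one_right hR.le (zpow_le_one_of_nonpos₀ one_le_two hk)
      have h1 := (hcon _ ht htR).le
      have hRp : 0 < R ^ ((α - γ) * s) := by positivity
      rw [mul_comm, ← ENNReal.le_div_iff_mul_le (by simp [hRp]) (by simp),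
        ← ENNReal.ofReal_div_of_pos hRp] at h1
      refine h1.trans (ENNReal.ofReal_le_ofReal ?_)
      rw [mul_div_assoc, mul_assoc]
      refine mul_le_mul_of_nonneg_left ?_ hc0.le
      rw [div_le_iff₀ hRp, hzpow, Real.mul_rpow hR.le (by positivity),
        Real.mul_rpow hR.le (by positivity), ← Real.rpow_mul zero_le_two,
        ← Real.rpow_mul zero_le_two, abs_of_nonpos hkR]
      calc R ^ ((n : ℝ) - γ * s) * 2 ^ ((k : ℝ) * ((n : ℝ) - γ * s))
          ≤ R ^ ((n : ℝ) - γ * s) *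
            2 ^ ((k : ℝ) * ((n : ℝ) - α * s) + -(δ * s * -(k : ℝ))) := by
            gcongr
            · exact one_le_two
            · nlinarith [mul_nonneg (mul_nonneg (sub_nonneg.2 hδ1) hs0.le) (neg_nonneg.2 hkR)]
        _ = _ := by
            rw [Real.rpow_add two_pos,
              show (n : ℝ) - γ * s = ((n : ℝ) - α * s) + (α - γ) * s by ring, Real.rpow_add hR]
            ring
    · have hkR : (0 : ℝ) ≤ k := by exact_mod_cast hk.le
      refine ((setLIntegral_le_lintegral _ _).trans hφ).trans (ENNReal.ofReal_le_ofReal ?_)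
      rw [mul_assoc]
      refine mul_le_mul_of_nonneg_left ?_ hc0.le
      rw [hzpow, Real.mul_rpow hR.le (by positivity), ← Real.rpow_mul zero_le_two,
        abs_of_nonneg hkR, mul_assoc, ← Real.rpow_add two_pos]
      refine le_mul_of_one_le_right (by positivity) (Real.one_le_rpow one_le_two ?_)
      nlinarith [mul_nonneg (sub_nonneg.2 hδ2) hkR]
  have hle := hpot.trans (rieszPot_le_of_dyadic_energy hα hαn hs hR hc0.le
    (fun k => by positivity) (summable_pow_natAbs hq0.le hq1) hdyadic)
  rw [← hD, ← hW, ENNReal.one_le_ofReal, hc, ← Real.rpow_mul (by positivity),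
    show -s * (1 / s) = -1 by field_simp, Real.rpow_neg_one, mul_right_comm,
    ← div_eq_mul_inv, one_le_div (by positivity)] at hle
  linarith

/-- A set on which a Riesz potential is at least one has a Vitali cover whose Hausdorff-type
sum is controlled by the energy. -/
lemma exists_closedBall_cover {n : ℕ} {α γ s : ℝ} (hα : 0 < α) (hγα : γ < α) (hs : 1 < s)
    (hαs : α * s < n) :
    ∃ C : ℝ, 0 < C ∧ ∀ (φ : Rn n → ℝ≥0∞) (E : Set (Rn n)) (V : ℝ), 0 < V →
      ∫⁻ y, φ y ^ s ≤ ENNReal.ofReal V → (∀ x ∈ E, 1 ≤ rieszPot n α φ x) →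
      ∃ (u : Set (Rn n)) (r : Rn n → ℝ), u.Countable ∧ (∀ x ∈ u, 0 < r x) ∧
        E ⊆ ⋃ x ∈ u, closedBall x (5 * r x) ∧
        ∑' x : u, ENNReal.ofReal (r x ^ ((n : ℝ) - γ * s)) ≤
          ENNReal.ofReal ((C * V) ^ (((n : ℝ) - γ * s) / ((n : ℝ) - α * s))) := by
  obtain ⟨c, hc, hball⟩ := exists_ball_energy_ge hα hγα hs hαs
  have hd : 0 < (n : ℝ) - α * s := sub_pos.2 hαs
  refine ⟨c⁻¹, inv_pos.2 hc, fun φ E V hV hφ hE => ?_⟩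
  set R := (c⁻¹ * V) ^ (1 / ((n : ℝ) - α * s)) with hR
  have hR0 : 0 < R := by positivity
  have hRpow (p : ℝ) : R ^ p = (c⁻¹ * V) ^ (p / ((n : ℝ) - α * s)) := by
    rw [hR, ← Real.rpow_mul (by positivity), one_div_mul_eq_div]
  have hRV : c⁻¹ * V = R ^ ((n : ℝ) - α * s) := by
    rw [hRpow, div_self hd.ne', Real.rpow_one]
  have hVR : V = c * R ^ ((n : ℝ) - α * s) := by
    rw [← hRV]
    field_simp
  choose! r hr using fun x hx => hball φ x R hR0 (hVR ▸ hφ) (hE x hx)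
  obtain ⟨u, huE, hdisj, hcov⟩ := Vitali.exists_disjoint_subfamily_covering_enlargement_closedBall
    E id r R (fun x hx => (hr x hx).2.1) 5 (by norm_num)
  simp only [id] at hdisj hcov
  have hpos : ∀ x ∈ u, 0 < r x := fun x hx => (hr x (huE hx)).1
  have hcount : u.Countable := hdisj.countable_of_nonempty_interior fun x hx =>
    ((nonempty_ball (x := x)).2 (hpos x hx)).mono ball_subset_interior_closedBall
  refine ⟨u, r, hcount, hpos, fun x hx => ?_, ?_⟩
  · obtain ⟨z, hz, hsub⟩ := hcov x hx
    exact mem_biUnion hz (hsub (mem_closedBall_self (hr x hx).1.le))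
  · have hcne : ENNReal.ofReal c ≠ 0 := by simpa using hc
    have hsum : ENNReal.ofReal c * ∑' x : u, ENNReal.ofReal (r x ^ ((n : ℝ) - γ * s)) ≤
        ENNReal.ofReal c * ENNReal.ofReal (R ^ ((n : ℝ) - γ * s)) := by
      calc _ = ∑' x : u, ENNReal.ofReal (c * r x ^ ((n : ℝ) - γ * s)) := by
            simp_rw [ENNReal.ofReal_mul hc.le, ENNReal.tsum_mul_left]
        _ ≤ ∑' x : u, ENNReal.ofReal (R ^ ((α - γ) * s)) *
            ∫⁻ y in closedBall (x : Rn n) (r x), φ y ^ s :=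
            ENNReal.tsum_le_tsum fun x => (hr x (huE x.2)).2.2
        _ = ENNReal.ofReal (R ^ ((α - γ) * s)) *
            ∫⁻ y in ⋃ x ∈ u, closedBall x (r x), φ y ^ s := by
            rw [ENNReal.tsum_mul_left,
              lintegral_biUnion hcount (fun x _ => measurableSet_closedBall) hdisj]
        _ ≤ ENNReal.ofReal (R ^ ((α - γ) * s)) * ENNReal.ofReal V := by
            gcongr
            exact (setLIntegral_le_lintegral _ _).trans hφ
        _ = _ := by
            rw [← ENNReal.ofReal_mul (by positivity), ← ENNReal.ofReal_mul hc.le]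
            congr 1
            rw [hVR, show (n : ℝ) - γ * s = ((n : ℝ) - α * s) + (α - γ) * s by ring,
              Real.rpow_add hR0]
            ring
    rw [ENNReal.mul_le_mul_iff_right hcne ENNReal.ofReal_ne_top] at hsum
    rwa [← hRpow]

lemma rieszCap_mono (n : ℕ) (α s : ℝ) {E F : Set (Rn n)} (h : E ⊆ F) :
    rieszCap n α s E ≤ rieszCap n α s F :=
  le_iInf₂ fun φ hφ => iInf₂_le φ fun x hx => hφ x (h hx)

lemma one_le_rieszPot_of_le_on_closedBall {n : ℕ} {α b t : ℝ} (hα : 0 < α) (hαn : α < n)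
    (ht : 0 < t)
    (hb : 1 ≤ (1 / rieszConst n α) * 2 ^ (α - (n : ℝ)) * volume.real (ball (0 : Rn n) 1) * b)
    {φ : Rn n → ℝ≥0∞} {x z : Rn n} (hz : z ∈ closedBall x t)
    (hφ : ∀ y ∈ closedBall x t, ENNReal.ofReal (b * t ^ (-α)) ≤ φ y) :
    1 ≤ rieszPot n α φ z := by
  have hK := rieszConst_pos hα hαn
  have hω := volume_real_unitBall_pos n
  have hn : 0 < n := by exact_mod_cast hα.trans hαn
  have : Nonempty (Fin n) := ⟨⟨0, hn⟩⟩
  calc (1 : ℝ≥0∞)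
      ≤ ENNReal.ofReal ((1 / rieszConst n α) * (2 * t) ^ (α - (n : ℝ)) * (b * t ^ (-α)) *
          (volume.real (ball (0 : Rn n) 1) * t ^ (n : ℝ))) := by
        rw [ENNReal.one_le_ofReal, Real.mul_rpow zero_le_two ht.le]
        have hcancel : t ^ (α - (n : ℝ)) * t ^ (-α) * t ^ (n : ℝ) = 1 := by
          rw [← Real.rpow_add ht, ← Real.rpow_add ht]
          convert Real.rpow_zero t using 2
          ring
        refine hb.trans_eq ?_
        linear_combination (-((1 / rieszConst n α) * 2 ^ (α - (n : ℝ)) *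
          volume.real (ball (0 : Rn n) 1) * b)) * hcancel
    _ = ∫⁻ _ in closedBall x t \ {z},
          ENNReal.ofReal ((1 / rieszConst n α) * (2 * t) ^ (α - (n : ℝ))) *
            ENNReal.ofReal (b * t ^ (-α)) := by
        rw [setLIntegral_const, measure_sdiff_null (measure_singleton z),
          volume_closedBall_Rn x ht.le, ← ENNReal.ofReal_mul (by positivity),
          ← ENNReal.ofReal_mul' (by positivity)]
    _ ≤ ∫⁻ y in closedBall x t \ {z},
          ENNReal.ofReal ((1 / rieszConst n α) * ‖z - y‖ ^ (α - (n : ℝ))) * φ y := by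
        refine setLIntegral_mono' (measurableSet_closedBall.diff (measurableSet_singleton z))
          fun y hy => ?_
        have hpos : 0 < ‖z - y‖ := norm_pos_iff.2 (sub_ne_zero.2 (Ne.symm hy.2))
        have hle : ‖z - y‖ ≤ 2 * t := by
          rw [← dist_eq_norm]
          have h1 := mem_closedBall.1 hz
          have h2 := mem_closedBall'.1 hy.1
          linarith [dist_triangle z x y]
        gcongr ENNReal.ofReal (_ * ?_) * ?_
        · exact Real.rpow_le_rpow_of_nonpos hpos hle (by linarith)
        · exact hφ y hy.1
    _ ≤ rieszPot n α φ z := setLIntegral_le_lintegral _ _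

lemma exists_rieszCap_biUnion_closedBall_le {n : ℕ} {α s : ℝ} (hα : 0 < α) (hs : 0 < s)
    (hαn : α < n) :
    ∃ C : ℝ, 0 < C ∧ ∀ (u : Set (Rn n)) (r : Rn n → ℝ), u.Countable → (∀ x ∈ u, 0 < r x) →
      rieszCap n α s (⋃ x ∈ u, closedBall x (r x)) ≤
        ENNReal.ofReal C * ∑' x : u, ENNReal.ofReal (r x ^ ((n : ℝ) - α * s)) := by
  have hK := rieszConst_pos hα hαn
  have hω := volume_real_unitBall_pos n
  set A := (1 / rieszConst n α) * 2 ^ (α - (n : ℝ)) * volume.real (ball (0 : Rn n) 1) with hA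
  have hA0 : 0 < A := by positivity
  refine ⟨A⁻¹ ^ s * volume.real (ball (0 : Rn n) 1), by positivity, fun u r hu hr => ?_⟩
  have := hu.to_subtype
  set φ : Rn n → ℝ≥0∞ := fun y => (∑' x : u, (closedBall (x : Rn n) (r x)).indicator
    (fun _ => ENNReal.ofReal (A⁻¹ * r x ^ (-α)) ^ s) y) ^ (1 / s) with hφ
  have hpot : ∀ z ∈ ⋃ x ∈ u, closedBall x (r x), 1 ≤ rieszPot n α φ z := by
    intro z hz
    obtain ⟨x, hx, hzx⟩ := mem_iUnion₂.1 hz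
    refine one_le_rieszPot_of_le_on_closedBall hα hαn (hr x hx)
      (by rw [← hA, mul_inv_cancel₀ hA0.ne']) hzx fun y hy => ?_
    have hle := ENNReal.le_tsum (f := fun x : u => (closedBall (x : Rn n) (r x)).indicator
      (fun _ => ENNReal.ofReal (A⁻¹ * r x ^ (-α)) ^ s) y) ⟨x, hx⟩
    rw [indicator_of_mem hy] at hle
    rw [hφ, one_div]
    exact (ENNReal.le_rpow_inv_iff hs).2 hle
  refine (iInf₂_le φ hpot).trans_eq ?_
  simp only [hφ, ← ENNReal.rpow_mul, one_div_mul_cancel hs.ne', ENNReal.rpow_one]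
  rw [lintegral_tsum fun x => (measurable_const.indicator measurableSet_closedBall).aemeasurable,
    ← ENNReal.tsum_mul_left]
  refine tsum_congr fun x => ?_
  have hx := hr x x.2
  rw [lintegral_indicator measurableSet_closedBall, setLIntegral_const,
    volume_closedBall_Rn _ hx.le, ENNReal.ofReal_rpow_of_pos (by positivity),
    ← ENNReal.ofReal_mul (by positivity), ← ENNReal.ofReal_mul (by positivity)]
  congr 1
  rw [Real.mul_rpow (by positivity) (by positivity), ← Real.rpow_mul hx.le,
    show (n : ℝ) - α * s = -α * s + n by ring, Real.rpow_add hx]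
  ring

lemma rieszCap_ball_lt_top {n : ℕ} {α s : ℝ} (hα : 0 < α) (hs : 0 < s) (hαn : α < n) :
    rieszCap n α s (ball 0 1) < ∞ := by
  obtain ⟨C, -, hC⟩ := exists_rieszCap_biUnion_closedBall_le hα hs hαn
  have h := hC {0} (fun _ => 1) (countable_singleton 0) (fun _ _ => one_pos)
  rw [biUnion_singleton] at h
  refine ((rieszCap_mono n α s ball_subset_closedBall).trans h).trans_lt ?_
  simp

/-- An upper bound valid for every admissible test energy passes to the capacity. -/
lemma le_rpow_rieszCap {n : ℕ} {α s C θ : ℝ} (hC : 0 < C) (hθ : 0 < θ) {E : Set (Rn n)}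
    {a : ℝ≥0∞}
    (h : ∀ (φ : Rn n → ℝ≥0∞) (V : ℝ), 0 < V → ∫⁻ y, φ y ^ s ≤ ENNReal.ofReal V →
      (∀ x ∈ E, 1 ≤ rieszPot n α φ x) → a ≤ ENNReal.ofReal ((C * V) ^ θ)) :
    a ≤ (ENNReal.ofReal C * rieszCap n α s E) ^ θ := by
  rw [← ENNReal.rpow_inv_le_iff hθ, mul_comm,
    ← ENNReal.div_le_iff (by simpa using hC) ENNReal.ofReal_ne_top]
  refine le_of_forall_gt fun v hv => ?_
  obtain ⟨v', hv'1, hv'2⟩ := exists_between hv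
  have hv'top : v' ≠ ∞ := hv'2.ne_top
  have hV : 0 < v'.toReal := ENNReal.toReal_pos (pos_of_gt hv'1).ne' hv'top
  obtain ⟨φ, hφ⟩ := iInf_lt_iff.1 hv'1
  obtain ⟨hpot, hφV⟩ := iInf_lt_iff.1 hφ
  have ha := h φ v'.toReal hV (by rw [ENNReal.ofReal_toReal hv'top]; exact hφV.le) hpot
  refine lt_of_le_of_lt ?_ hv'2
  rw [ENNReal.div_le_iff (by simpa using hC) ENNReal.ofReal_ne_top,
    ENNReal.rpow_inv_le_iff hθ]
  refine ha.trans_eq ?_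
  rw [← ENNReal.ofReal_rpow_of_pos (by positivity), ENNReal.ofReal_mul hC.le,
    ENNReal.ofReal_toReal hv'top, mul_comm]

lemma exists_rieszCap_le_rpow_rieszCap {n : ℕ} {α γ s : ℝ} (hγ : 0 < γ) (hγα : γ < α)
    (hs : 1 < s) (hαs : α * s < n) :
    ∃ C : ℝ, 0 < C ∧ ∀ E : Set (Rn n), rieszCap n γ s E ≤
      ENNReal.ofReal C * rieszCap n α s E ^ (((n : ℝ) - γ * s) / ((n : ℝ) - α * s)) := by
  have hα := hγ.trans hγα
  have hs0 : 0 < s := one_pos.trans hs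
  have hγs : γ * s < n := (mul_lt_mul_of_pos_right hγα hs0).trans hαs
  have hθ : 0 < ((n : ℝ) - γ * s) / ((n : ℝ) - α * s) := div_pos (by linarith) (by linarith)
  set θ := ((n : ℝ) - γ * s) / ((n : ℝ) - α * s) with hθdef
  obtain ⟨C₁, hC₁, hcover⟩ := exists_closedBall_cover hα hγα hs hαs
  obtain ⟨C₂, hC₂, htest⟩ :=
    exists_rieszCap_biUnion_closedBall_le (n := n) hγ hs0 (by nlinarith)
  have h5 : (0 : ℝ) < 5 ^ ((n : ℝ) - γ * s) := by positivity
  set K := C₂ * 5 ^ ((n : ℝ) - γ * s) with hKdef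
  have hK : 0 < K := by positivity
  refine ⟨K * C₁ ^ θ, by positivity, fun E => ?_⟩
  have hmain : rieszCap n γ s E / ENNReal.ofReal K ≤
      (ENNReal.ofReal C₁ * rieszCap n α s E) ^ θ := by
    refine le_rpow_rieszCap hC₁ hθ fun φ V hV hφ hpot => ?_
    obtain ⟨u, r, hu, hr, hE, hsum⟩ := hcover φ E V hV hφ hpot
    rw [ENNReal.div_le_iff (by simpa using hK) ENNReal.ofReal_ne_top]
    calc rieszCap n γ s E ≤ rieszCap n γ s (⋃ x ∈ u, closedBall x (5 * r x)) :=
          rieszCap_mono n γ s hE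
      _ ≤ ENNReal.ofReal C₂ * ∑' x : u, ENNReal.ofReal ((5 * r x) ^ ((n : ℝ) - γ * s)) :=
          htest u (fun x => 5 * r x) hu fun x hx => mul_pos (by norm_num) (hr x hx)
      _ = ENNReal.ofReal K * ∑' x : u, ENNReal.ofReal (r x ^ ((n : ℝ) - γ * s)) := by
          rw [← ENNReal.tsum_mul_left, ← ENNReal.tsum_mul_left]
          refine tsum_congr fun x => ?_
          rw [Real.mul_rpow (by norm_num) (hr x x.2).le, ENNReal.ofReal_mul h5.le, hKdef,
            ENNReal.ofReal_mul hC₂.le, mul_assoc]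
      _ ≤ _ := by
          rw [mul_comm]
          gcongr
  rw [ENNReal.div_le_iff (by simpa using hK) ENNReal.ofReal_ne_top,
    ENNReal.mul_rpow_of_nonneg _ _ hθ.le, ENNReal.ofReal_rpow_of_pos hC₁] at hmain
  rw [ENNReal.ofReal_mul hK.le]
  refine hmain.trans_eq ?_
  ring

lemma rieszCap_ball_pos {n : ℕ} {α s : ℝ} (hα : 0 < α) (hs : 1 < s) (hαs : α * s < n) :
    0 < rieszCap n α s (ball 0 1) := by
  have hd : 0 < (n : ℝ) - α * s := sub_pos.2 hαs
  have hn : (0 : ℝ) < n := lt_trans (mul_pos hα (one_pos.trans hs)) hαs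
  obtain ⟨C, hC, hcover⟩ := exists_closedBall_cover hα hα hs hαs
  have hω := volume_real_unitBall_pos n
  simp only [zero_mul, sub_zero] at hcover
  have hθ : 0 < (n : ℝ) / ((n : ℝ) - α * s) := div_pos hn hd
  set K := volume.real (ball (0 : Rn n) 1) * 5 ^ (n : ℝ) with hKdef
  have hK : 0 < K := by positivity
  have hmain : volume (ball (0 : Rn n) 1) / ENNReal.ofReal K ≤
      (ENNReal.ofReal C * rieszCap n α s (ball 0 1)) ^ ((n : ℝ) / ((n : ℝ) - α * s)) := by
    refine le_rpow_rieszCap hC hθ fun φ V hV hφ hpot => ?_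
    obtain ⟨u, r, hu, hr, hE, hsum⟩ := hcover φ _ V hV hφ hpot
    rw [ENNReal.div_le_iff (by simpa using hK) ENNReal.ofReal_ne_top]
    calc volume (ball (0 : Rn n) 1) ≤ ∑' x : u, volume (closedBall (x : Rn n) (5 * r x)) :=
          (measure_mono hE).trans (measure_biUnion_le _ hu _)
      _ = ENNReal.ofReal K * ∑' x : u, ENNReal.ofReal (r x ^ (n : ℝ)) := by
          rw [← ENNReal.tsum_mul_left]
          refine tsum_congr fun x => ?_
          have hx := hr x x.2
          rw [volume_closedBall_Rn _ (by positivity), ← ENNReal.ofReal_mul hK.le,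
            Real.mul_rpow (by norm_num) hx.le, hKdef, mul_assoc]
      _ ≤ _ := by
          rw [mul_comm]
          gcongr
  by_contra hzero
  rw [nonpos_iff_eq_zero.1 (not_lt.1 hzero), mul_zero, ENNReal.zero_rpow_of_pos hθ,
    nonpos_iff_eq_zero, ENNReal.div_eq_zero_iff] at hmain
  rcases hmain with h | h
  · exact (measure_ball_pos volume (0 : Rn n) one_pos).ne' h
  · exact ENNReal.ofReal_ne_top h

lemma choquetOn_rpow_eq {X : Type*} (c : Set X → ℝ≥0∞) (A : Set X) (g : X → ℝ≥0∞) {θ : ℝ}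
    (hθ : 0 < θ) :
    choquetOn c A (fun x => g x ^ θ⁻¹) =
      ∫⁻ τ in Ioi (0 : ℝ), c {x | x ∈ A ∧ ENNReal.ofReal (τ ^ θ) < g x} := by
  refine setLIntegral_congr_fun measurableSet_Ioi fun τ hτ => ?_
  simp only [ENNReal.lt_rpow_inv_iff hθ, ENNReal.ofReal_rpow_of_pos (mem_Ioi.1 hτ)]

lemma choquetOn_le_of_le_rpow {X : Type*} {c₁ c₂ : Set X → ℝ≥0∞} {K : ℝ≥0∞} {θ : ℝ}
    (hK : K ≠ ∞) (hθ : 1 < θ) (hc₂ : Monotone c₂) (hc : ∀ E, c₁ E ≤ K * c₂ E ^ θ)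
    (A : Set X) (g : X → ℝ≥0∞) :
    choquetOn c₁ A g ≤
      K * ENNReal.ofReal θ * choquetOn c₂ A (fun x => g x ^ θ⁻¹) ^ θ := by
  rw [choquetOn_rpow_eq _ _ _ (one_pos.trans hθ), mul_assoc]
  have hanti : Antitone fun t : ℝ => c₂ {x | x ∈ A ∧ ENNReal.ofReal t < g x} :=
    fun t t' htt' => hc₂ fun x hx => ⟨hx.1, (ENNReal.ofReal_le_ofReal htt').trans_lt hx.2⟩
  calc choquetOn c₁ A g
      ≤ ∫⁻ t in Ioi (0 : ℝ), K * c₂ {x | x ∈ A ∧ ENNReal.ofReal t < g x} ^ θ :=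
        lintegral_mono fun t => hc _
    _ = K * ∫⁻ t in Ioi (0 : ℝ), c₂ {x | x ∈ A ∧ ENNReal.ofReal t < g x} ^ θ :=
        lintegral_const_mul' _ _ hK
    _ ≤ _ := by
        gcongr
        exact lintegral_antitone_rpow_le hanti hθ

/-- Pointwise comparison between capacitary maximal functions of
different orders: for `0 < γ < α < n/s`, `1 < s < n/α`,
`M_{cap_{γ,s}} f(x) ≤ C (M_{cap_{α,s}}(|f|^{(n-αs)/(n-γs)})(x))^{(n-γs)/(n-αs)}`. -/
theorem statement14 (n : ℕ) (α γ s : ℝ) (hγ0 : 0 < γ) (hγα : γ < α)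
    (hαs : α < n / s) (hs1 : 1 < s) (hsn : s < n / α) :
    ∃ C : ℝ, 0 < C ∧ ∀ (f : Rn n → ℝ) (x : Rn n),
      maximalCap n γ s (fun y => ENNReal.ofReal |f y|) x ≤
        ENNReal.ofReal C *
          (maximalCap n α s
              (fun y => ENNReal.ofReal |f y| ^ (((n : ℝ) - α * s) / ((n : ℝ) - γ * s))) x) ^
            (((n : ℝ) - γ * s) / ((n : ℝ) - α * s)) := by
  have hs0 : 0 < s := one_pos.trans hs1
  have hα : 0 < α := hγ0.trans hγα
  have hαn : α * s < n := (lt_div_iff₀ hs0).1 hαs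
  have hγαs : γ * s < α * s := mul_lt_mul_of_pos_right hγα hs0
  have hdα : 0 < (n : ℝ) - α * s := sub_pos.2 hαn
  have hdγ : 0 < (n : ℝ) - γ * s := by linarith
  set θ := ((n : ℝ) - γ * s) / ((n : ℝ) - α * s) with hθdef
  have hθ : 1 < θ := (one_lt_div hdα).2 (by linarith)
  have hθ0 : 0 < θ := one_pos.trans hθ
  have hinv : ((n : ℝ) - α * s) / ((n : ℝ) - γ * s) = θ⁻¹ := (inv_div _ _).symm
  obtain ⟨K, hK, hcap⟩ := exists_rieszCap_le_rpow_rieszCap hγ0 hγα hs1 hαn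
  have hcγ : rieszCap n γ s (ball 0 1) ≠ 0 := (rieszCap_ball_pos hγ0 hs1 (by linarith)).ne'
  have hcα : rieszCap n α s (ball 0 1) ≠ ∞ :=
    (rieszCap_ball_lt_top hα hs0 (by nlinarith)).ne
  have hcα0 : rieszCap n α s (ball 0 1) ≠ 0 := (rieszCap_ball_pos hα hs1 hαn).ne'
  set cα := rieszCap n α s (ball (0 : Rn n) 1) with hcαdef
  set cγ := rieszCap n γ s (ball (0 : Rn n) 1) with hcγdef
  set C := cγ⁻¹ * (ENNReal.ofReal K * ENNReal.ofReal θ) * cα ^ θ with hCdef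
  have hCtop : C ≠ ∞ := ENNReal.mul_ne_top
    (ENNReal.mul_ne_top (ENNReal.inv_ne_top.2 hcγ)
      (ENNReal.mul_ne_top ENNReal.ofReal_ne_top ENNReal.ofReal_ne_top))
    (ENNReal.rpow_ne_top_of_nonneg hθ0.le hcα)
  refine ⟨C.toReal + 1, by positivity, fun f x => ?_⟩
  have hC : C ≤ ENNReal.ofReal (C.toReal + 1) :=
    ENNReal.le_ofReal_iff_toReal_le hCtop (by positivity) |>.2 (by linarith)
  rw [hinv]
  refine iSup₂_le fun r hr => ?_
  refine le_trans ?_ (mul_le_mul' hC (ENNReal.rpow_le_rpow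
    (le_iSup₂ (f := fun (r : ℝ) (_ : 0 < r) =>
      (cα * ENNReal.ofReal (r ^ ((n : ℝ) - α * s)))⁻¹ *
        choquetOn (rieszCap n α s) (ball x r) (fun y => ENNReal.ofReal |f y| ^ θ⁻¹)) r hr)
    hθ0.le))
  have hrα : 0 < r ^ ((n : ℝ) - α * s) := by positivity
  have hrpow : ENNReal.ofReal (r ^ ((n : ℝ) - α * s)) ^ θ =
      ENNReal.ofReal (r ^ ((n : ℝ) - γ * s)) := by
    rw [ENNReal.ofReal_rpow_of_pos hrα, ← Real.rpow_mul hr.le, hθdef, mul_div_cancel₀ _ hdα.ne']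
  have hrγ : ENNReal.ofReal (r ^ ((n : ℝ) - γ * s)) ≠ 0 := by
    simpa using Real.rpow_pos_of_pos hr _
  set J := choquetOn (rieszCap n α s) (ball x r) (fun y => ENNReal.ofReal |f y| ^ θ⁻¹) with hJ
  calc (cγ * ENNReal.ofReal (r ^ ((n : ℝ) - γ * s)))⁻¹ *
        choquetOn (rieszCap n γ s) (ball x r) (fun y => ENNReal.ofReal |f y|)
      ≤ (cγ * ENNReal.ofReal (r ^ ((n : ℝ) - γ * s)))⁻¹ *
        (ENNReal.ofReal K * ENNReal.ofReal θ * J ^ θ) := by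
        gcongr
        exact choquetOn_le_of_le_rpow ENNReal.ofReal_ne_top hθ
          (fun _ _ h => rieszCap_mono n α s h) hcap _ _
    _ = C * ((cα * ENNReal.ofReal (r ^ ((n : ℝ) - α * s)))⁻¹ * J) ^ θ := by
        have hcancel : cα ^ θ * (cα ^ θ)⁻¹ = 1 := ENNReal.mul_inv_cancel
          (ENNReal.rpow_pos (pos_iff_ne_zero.2 hcα0) hcα).ne'
          (ENNReal.rpow_ne_top_of_nonneg hθ0.le hcα)
        rw [ENNReal.mul_rpow_of_nonneg _ _ hθ0.le, ENNReal.inv_rpow,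
          ENNReal.mul_rpow_of_nonneg _ _ hθ0.le, hrpow,
          ENNReal.mul_inv (Or.inl hcγ) (Or.inr hrγ),
          ENNReal.mul_inv (Or.inr ENNReal.ofReal_ne_top) (Or.inr hrγ), hCdef]
        calc _ = cγ⁻¹ * (ENNReal.ofReal K * ENNReal.ofReal θ) *
              (ENNReal.ofReal (r ^ ((n : ℝ) - γ * s)))⁻¹ * J ^ θ * 1 := by ring
          _ = _ := by
            rw [← hcancel]
            ring

end
end

section
/- Let β ∈ (0,n), p ∈ [1,∞), and f ∈ L^p(H^β_∞). Then for H^β-almost every x ∈ ℝ^n, the precise representative f*(x) := lim_{r→0} (1/|B(x,r)|) ∫_{B(x,r)} f dy exists and lim_{r→0} (1/(ω_β r^β)) ∫_{B(x,r)} |f - f*(x)|^p dH^β_∞ = 0. -/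
open scoped ENNReal
open Metric Set MeasureTheory

noncomputable section

/-- The normalization constant `ω_β = π^{β/2}/Γ(β/2+1)`. -/
noncomputable def omegaC (β : ℝ) : ℝ≥0∞ :=
  ENNReal.ofReal (Real.pi ^ (β / 2) / Real.Gamma (β / 2 + 1))

/-- The `β`-dimensional Hausdorff content `H^β_∞`, defined via countable
coverings by balls: `inf {∑ ω_β r_i^β : E ⊆ ⋃ B(x_i, r_i)}`. -/
noncomputable def hContent (n : ℕ) (β : ℝ) (E : Set (Rn n)) : ℝ≥0∞ :=
  ⨅ (c : ℕ → Rn n × ℝ) (_ : E ⊆ ⋃ i, ball (c i).1 (c i).2),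
    ∑' i, omegaC β * ENNReal.ofReal ((c i).2 ^ β)

/-- The centered Hausdorff content maximal function
`M_{H^β_∞} g(x) := sup_{r>0} (1/(ω_β r^β)) ∫_{B(x,r)} g dH^β_∞`. -/
noncomputable def maximalH (n : ℕ) (β : ℝ) (g : Rn n → ℝ≥0∞) (x : Rn n) : ℝ≥0∞ :=
  ⨆ (r : ℝ) (_ : 0 < r),
    (omegaC β * ENNReal.ofReal (r ^ β))⁻¹ * choquetOn (hContent n β) (ball x r) g

lemma omegaC_ne_zero {β : ℝ} (hβ : 0 < β) : omegaC β ≠ 0 := by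
  have : 0 < Real.Gamma (β / 2 + 1) := Real.Gamma_pos_of_pos (by positivity)
  simp only [omegaC, ne_eq, ENNReal.ofReal_eq_zero, not_le]
  positivity

lemma omegaC_ne_top {β : ℝ} : omegaC β ≠ ∞ := ENNReal.ofReal_ne_top

lemma hContent_mono {n : ℕ} {β : ℝ} : Monotone (hContent n β) := fun _ _ h =>
  le_iInf₂ fun c hc => iInf₂_le c (h.trans hc)

lemma hContent_le_tsum {n : ℕ} {β : ℝ} (hβ : 0 < β) {ι : Type*} [Countable ι] {E : Set (Rn n)}
    (y : ι → Rn n) (s : ι → ℝ) (h : E ⊆ ⋃ i, ball (y i) (s i)) :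
    hContent n β E ≤ ∑' i, omegaC β * ENNReal.ofReal (s i ^ β) := by
  obtain ⟨g, hg⟩ := exists_injective_nat ι
  let c : ℕ → Rn n × ℝ := Function.extend g (fun i => (y i, s i)) 0
  refine (iInf₂_le c fun x hx => ?_).trans_eq ?_
  · obtain ⟨i, hi⟩ := mem_iUnion.1 (h hx)
    exact mem_iUnion.2 ⟨g i, by simpa [c, hg.extend_apply] using hi⟩
  · rw [← tsum_extend_zero hg]
    congr 1 with k
    by_cases hk : ∃ i, g i = k
    · obtain ⟨i, rfl⟩ := hk
      simp [c, hg.extend_apply]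
    · simp [c, Function.extend_apply' _ _ _ hk, Real.zero_rpow hβ.ne']

lemma hContent_ball_le {n : ℕ} {β : ℝ} (hβ : 0 < β) (x : Rn n) (r : ℝ) :
    hContent n β (ball x r) ≤ omegaC β * ENNReal.ofReal (r ^ β) := by
  simpa using hContent_le_tsum hβ (ι := Unit) (fun _ => x) (fun _ => r)
    (subset_iUnion (fun _ : Unit => ball x r) ())

lemma hContent_empty {n : ℕ} {β : ℝ} (hβ : 0 < β) : hContent n β ∅ = 0 := by
  simpa using hContent_le_tsum hβ (n := n) (E := ∅) (ι := Empty) (fun _ => 0) (fun _ => 0)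
    (empty_subset _)

lemma hContent_iUnion_le {n : ℕ} {β : ℝ} (hβ : 0 < β) {ι : Type*} [Countable ι]
    (E : ι → Set (Rn n)) : hContent n β (⋃ i, E i) ≤ ∑' i, hContent n β (E i) := by
  refine ENNReal.le_of_forall_pos_le_add fun ε hε hfin => ?_
  obtain ⟨δ, hδ, hδε⟩ := ENNReal.exists_pos_sum_of_countable (ENNReal.coe_pos.2 hε).ne' ι
  have key : ∀ i, ∃ c : ℕ → Rn n × ℝ, E i ⊆ ⋃ k, ball (c k).1 (c k).2 ∧
      ∑' k, omegaC β * ENNReal.ofReal ((c k).2 ^ β) < hContent n β (E i) + δ i := by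
    intro i
    have : hContent n β (E i) < hContent n β (E i) + δ i :=
      ENNReal.lt_add_right (ne_top_of_le_ne_top hfin.ne (ENNReal.le_tsum i))
        (ENNReal.coe_pos.2 (hδ i)).ne'
    simpa [hContent, iInf_lt_iff] using this
  choose c hcE hc using key
  calc hContent n β (⋃ i, E i)
      ≤ ∑' q : ι × ℕ, omegaC β * ENNReal.ofReal ((c q.1 q.2).2 ^ β) := by
        refine hContent_le_tsum hβ (fun q : ι × ℕ => (c q.1 q.2).1) _ fun x hx => ?_
        obtain ⟨i, hi⟩ := mem_iUnion.1 hx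
        obtain ⟨k, hk⟩ := mem_iUnion.1 (hcE i hi)
        exact mem_iUnion.2 ⟨(i, k), hk⟩
    _ = ∑' i, ∑' k, omegaC β * ENNReal.ofReal ((c i k).2 ^ β) := ENNReal.tsum_prod'
    _ ≤ ∑' i, (hContent n β (E i) + δ i) := ENNReal.tsum_le_tsum fun i => (hc i).le
    _ = ∑' i, hContent n β (E i) + ∑' i, (δ i : ℝ≥0∞) := ENNReal.tsum_add
    _ ≤ ∑' i, hContent n β (E i) + ε := by gcongr

lemma hContent_union_le {n : ℕ} {β : ℝ} (hβ : 0 < β) (E F : Set (Rn n)) :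
    hContent n β (E ∪ F) ≤ hContent n β E + hContent n β F := by
  rw [union_eq_iUnion]
  refine (hContent_iUnion_le hβ _).trans_eq ?_
  rw [tsum_fintype, Fintype.sum_bool]
  rfl

lemma antitone_hContent_level {n : ℕ} {β : ℝ} (A : Set (Rn n)) (g : Rn n → ℝ≥0∞) :
    Antitone fun t : ℝ => hContent n β {x | x ∈ A ∧ ENNReal.ofReal t < g x} :=
  fun _ _ h => hContent_mono fun _ hx => ⟨hx.1, (ENNReal.ofReal_le_ofReal h).trans_lt hx.2⟩

/-- At most `3 ^ n` pairwise disjoint balls of radius greater than `s` can meet a ball of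
radius `s`. -/
lemma card_le_of_disjoint_ball {n : ℕ} {T : Finset (Rn n)} {r : Rn n → ℝ}
    (hT : (T : Set (Rn n)).PairwiseDisjoint fun i => ball i (r i)) {y : Rn n} {s : ℝ}
    (hs : 0 < s) (h : ∀ i ∈ T, s < r i ∧ (ball y s ∩ ball i (r i)).Nonempty) :
    T.card ≤ 3 ^ n := by
  have key : ∀ i, ∃ c : Rn n, i ∈ T → ball c s ⊆ ball i (r i) ∩ ball y (3 * s) := by
    intro i
    by_cases hi : i ∈ T
    swap
    · exact ⟨0, fun h => (hi h).elim⟩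
    obtain ⟨hr, z, hzy, hzi⟩ := h i hi
    have hr0 : 0 < r i := hs.trans hr
    have hsr : s / r i ≤ 1 := (div_le_one hr0).2 hr.le
    rw [mem_ball] at hzy hzi
    have h1 : dist (AffineMap.lineMap z i (s / r i)) i ≤ r i - s := by
      rw [dist_lineMap_right, Real.norm_of_nonneg (by linarith)]
      calc (1 - s / r i) * dist z i ≤ (1 - s / r i) * r i := by
            gcongr
        _ = r i - s := by field_simp
    have h2 : dist (AffineMap.lineMap z i (s / r i)) z ≤ s := by
      rw [dist_lineMap_left, Real.norm_of_nonneg (by positivity)]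
      calc s / r i * dist z i ≤ s / r i * r i := by gcongr
        _ = s := by field_simp
    refine ⟨AffineMap.lineMap z i (s / r i), fun _ => subset_inter ?_ ?_⟩
    · exact ball_subset_ball' (by linarith)
    · refine ball_subset_ball' ?_
      linarith [dist_triangle (AffineMap.lineMap z i (s / r i)) z y]
  choose c hc using key
  have hvol : ∑ i ∈ T, volume (ball (c i) s) ≤ volume (ball y (3 * s)) := by
    rw [← measure_biUnion_finset (fun i hi j hj hij => ?_) (fun _ _ => measurableSet_ball)]
    · exact measure_mono (iUnion₂_subset fun i hi => (hc i hi).trans inter_subset_right)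
    · exact (hT hi hj hij).mono ((hc i hi).trans inter_subset_left)
        ((hc j hj).trans inter_subset_left)
  rw [Finset.sum_congr rfl fun i _ => Measure.addHaar_ball_of_pos volume (c i) hs,
    Measure.addHaar_ball_of_pos volume y (by positivity : 0 < 3 * s)] at hvol
  simp only [Finset.sum_const, nsmul_eq_mul, ← mul_assoc, finrank_euclideanSpace_fin,
    mul_pow] at hvol
  rw [ENNReal.mul_le_mul_iff_left (measure_ball_pos _ _ one_pos).ne' measure_ball_lt_top.ne,
    ENNReal.ofReal_mul (by positivity),
    ENNReal.mul_le_mul_iff_left (by simpa using pow_pos hs n) ENNReal.ofReal_ne_top] at hvol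
  rw [← ENNReal.ofReal_natCast, ENNReal.ofReal_le_ofReal_iff (by positivity)] at hvol
  exact_mod_cast hvol

/-- The balls `ball i (r i)`, `i ∈ S`, satisfy the `β`-packing condition: those which are smaller
than, and centered in, a given ball of radius `s` contribute at most `2 s ^ β`. -/
def IsPacking {n : ℕ} (β : ℝ) (r : Rn n → ℝ) (S : Set (Rn n)) : Prop :=
  ∀ T : Finset (Rn n), ↑T ⊆ S → ∀ (y : Rn n) (s : ℝ), 0 < s →
    (∀ i ∈ T, dist i y ≤ s ∧ r i ≤ s) → ∑ i ∈ T, r i ^ β ≤ 2 * s ^ β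

/-- The constant in the superadditivity of the Hausdorff content along packings. -/
def packC (n : ℕ) (β : ℝ) : ℝ := 2 * 2 ^ β + 3 ^ n

lemma packC_pos {n : ℕ} {β : ℝ} : 0 < packC n β := by unfold packC; positivity

lemma IsPacking.sum_hContent_ball_inter_ball_le {n : ℕ} {β : ℝ} (hβ : 0 < β) {r : Rn n → ℝ}
    {T : Finset (Rn n)} (hT : IsPacking β r (T : Set (Rn n))) (hr : ∀ i ∈ T, 0 < r i)
    (hd : (T : Set (Rn n)).PairwiseDisjoint fun i => ball i (r i)) (y : Rn n) (s : ℝ) :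
    ∑ i ∈ T, hContent n β (ball y s ∩ ball i (r i)) ≤
      ENNReal.ofReal (packC n β) * (omegaC β * ENNReal.ofReal (s ^ β)) := by
  classical
  rcases le_or_gt s 0 with hs | hs
  · simp [ball_eq_empty.2 hs, hContent_empty hβ]
  set T' := T.filter fun i => (ball y s ∩ ball i (r i)).Nonempty with hT'
  have h0 : ∑ i ∈ T, hContent n β (ball y s ∩ ball i (r i)) =
      ∑ i ∈ T', hContent n β (ball y s ∩ ball i (r i)) := by
    refine (Finset.sum_subset (Finset.filter_subset _ _) fun i hi hi' => ?_).symm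
    have : ball y s ∩ ball i (r i) = ∅ := by
      simpa [hT', hi, not_nonempty_iff_eq_empty] using hi'
    rw [this, hContent_empty hβ]
  rw [h0, ← Finset.sum_filter_add_sum_filter_not T' fun i => r i ≤ s, packC,
    ENNReal.ofReal_add (by positivity) (by positivity), add_mul]
  have hsub : ∀ i ∈ T', i ∈ T := fun i hi => (Finset.mem_filter.1 hi).1
  gcongr
  · calc ∑ i ∈ T' with r i ≤ s, hContent n β (ball y s ∩ ball i (r i))
        ≤ ∑ i ∈ T' with r i ≤ s, omegaC β * ENNReal.ofReal (r i ^ β) :=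
          Finset.sum_le_sum fun i _ =>
            (hContent_mono inter_subset_right).trans (hContent_ball_le hβ _ _)
      _ = omegaC β * ENNReal.ofReal (∑ i ∈ T' with r i ≤ s, r i ^ β) := by
          rw [← Finset.mul_sum, ENNReal.ofReal_sum_of_nonneg]
          exact fun i hi => Real.rpow_nonneg (hr i (hsub i (Finset.mem_filter.1 hi).1)).le _
      _ ≤ omegaC β * ENNReal.ofReal (2 * (2 * s) ^ β) := by
          gcongr
          refine hT _ (fun i hi => hsub i (Finset.mem_filter.1 hi).1) y (2 * s) (by positivity)
            fun i hi => ?_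
          obtain ⟨hi1, hi2⟩ := Finset.mem_filter.1 hi
          obtain ⟨z, hzy, hzi⟩ := (Finset.mem_filter.1 hi1).2
          rw [mem_ball] at hzy hzi
          constructor
          · linarith [dist_triangle_left i y z]
          · linarith
      _ = ENNReal.ofReal (2 * 2 ^ β) * (omegaC β * ENNReal.ofReal (s ^ β)) := by
          rw [Real.mul_rpow zero_le_two hs.le, ← mul_assoc, ENNReal.ofReal_mul (by positivity)]
          ring
  · calc ∑ i ∈ T' with ¬ r i ≤ s, hContent n β (ball y s ∩ ball i (r i))
        ≤ ∑ i ∈ T' with ¬ r i ≤ s, omegaC β * ENNReal.ofReal (s ^ β) :=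
          Finset.sum_le_sum fun i _ =>
            (hContent_mono inter_subset_left).trans (hContent_ball_le hβ _ _)
      _ = (Finset.card {i ∈ T' | ¬ r i ≤ s} : ℝ≥0∞) * (omegaC β * ENNReal.ofReal (s ^ β)) := by
          rw [Finset.sum_const, nsmul_eq_mul]
      _ ≤ ENNReal.ofReal (3 ^ n) * (omegaC β * ENNReal.ofReal (s ^ β)) := by
          gcongr
          rw [← ENNReal.ofReal_natCast]
          gcongr
          have := card_le_of_disjoint_ball (T := {i ∈ T' | ¬ r i ≤ s}) (r := r) (y := y)
            (hd.subset fun i hi => hsub i (Finset.mem_filter.1 hi).1) hs fun i hi => by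
              obtain ⟨hi1, hi2⟩ := Finset.mem_filter.1 hi
              exact ⟨not_le.1 hi2, (Finset.mem_filter.1 hi1).2⟩
          exact_mod_cast this

lemma IsPacking.sum_hContent_inter_ball_le {n : ℕ} {β : ℝ} (hβ : 0 < β) {r : Rn n → ℝ}
    {T : Finset (Rn n)} (hT : IsPacking β r (T : Set (Rn n))) (hr : ∀ i ∈ T, 0 < r i)
    (hd : (T : Set (Rn n)).PairwiseDisjoint fun i => ball i (r i)) (E : Set (Rn n)) :
    ∑ i ∈ T, hContent n β (E ∩ ball i (r i)) ≤ ENNReal.ofReal (packC n β) * hContent n β E := by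
  have hc0 : ENNReal.ofReal (packC n β) ≠ 0 := by simpa using packC_pos
  conv_rhs => rw [hContent, ENNReal.mul_iInf_of_ne hc0 ENNReal.ofReal_ne_top]
  refine le_iInf fun c => ?_
  rw [ENNReal.mul_iInf_of_ne hc0 ENNReal.ofReal_ne_top]
  refine le_iInf fun hc => ?_
  calc ∑ i ∈ T, hContent n β (E ∩ ball i (r i))
      ≤ ∑ i ∈ T, ∑' k, hContent n β (ball (c k).1 (c k).2 ∩ ball i (r i)) := by
        refine Finset.sum_le_sum fun i _ => ?_
        refine (hContent_mono ?_).trans (hContent_iUnion_le hβ _)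
        rw [← iUnion_inter]
        exact inter_subset_inter_left _ hc
    _ = ∑' k, ∑ i ∈ T, hContent n β (ball (c k).1 (c k).2 ∩ ball i (r i)) :=
        (Summable.tsum_finsetSum fun _ _ => ENNReal.summable).symm
    _ ≤ ∑' k, ENNReal.ofReal (packC n β) * (omegaC β * ENNReal.ofReal ((c k).2 ^ β)) :=
        ENNReal.tsum_le_tsum fun k => hT.sum_hContent_ball_inter_ball_le hβ hr hd _ _
    _ = _ := ENNReal.tsum_mul_left

lemma IsPacking.mono {n : ℕ} {β : ℝ} {r : Rn n → ℝ} {S S' : Set (Rn n)} (h : IsPacking β r S)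
    (hS : S' ⊆ S) : IsPacking β r S' := fun T hT => h T (hT.trans hS)

/-- Every family of balls has a subfamily which is a packing and such that every ball of the
family is smaller than, and centered in, a ball that is saturated by the subfamily. -/
lemma exists_isPacking {n : ℕ} {β : ℝ} (hβ : 0 < β) (r : Rn n → ℝ) (u : Set (Rn n))
    (hr : ∀ i ∈ u, 0 < r i) :
    ∃ S ⊆ u, IsPacking β r S ∧ ∀ j ∈ u, ∃ (y : Rn n) (s : ℝ) (T : Finset (Rn n)), ↑T ⊆ S ∧
      dist j y ≤ s ∧ r j ≤ s ∧ (∀ i ∈ T, dist i y ≤ s) ∧ s ^ β ≤ ∑ i ∈ T, r i ^ β := by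
  classical
  obtain ⟨S, hS⟩ := zorn_subset {S | S ⊆ u ∧ IsPacking β r S} fun c hc hchain => by
    refine ⟨⋃₀ c, ⟨sUnion_subset fun S hS => (hc hS).1, fun T hT y s hs h => ?_⟩,
      fun S hS => subset_sUnion_of_mem hS⟩
    rcases c.eq_empty_or_nonempty with rfl | hne
    · have : T = ∅ := by simpa using hT
      subst this
      simp; positivity
    · obtain ⟨S, hSc, hTS⟩ := hchain.directedOn.exists_mem_subset_of_finset_subset_biUnion hne
        (by simpa [sUnion_eq_biUnion] using hT)
      exact (hc hSc).2 T hTS y s hs h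
  have hSp := hS.prop
  refine ⟨S, hSp.1, hSp.2, fun j hj => ?_⟩
  by_cases hjS : j ∈ S
  · exact ⟨j, r j, {j}, by simpa using hjS, by simpa using (hr j hj).le, le_rfl,
      by simpa using (hr j hj).le, by simp⟩
  have hnot : ¬ IsPacking β r (insert j S) := fun h =>
    hjS (hS.le_of_ge ⟨insert_subset hj hSp.1, h⟩ (subset_insert j S) (mem_insert j S))
  simp only [IsPacking, not_forall, not_le] at hnot
  obtain ⟨T, hTS, y, s, hs, hT, hlt⟩ := hnot
  have hjT : j ∈ T := by
    by_contra hjT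
    refine hlt.not_ge (hSp.2 T (fun i hi => ?_) y s hs hT)
    exact (hTS hi).resolve_left fun h => hjT (h ▸ hi)
  refine ⟨y, s, T.erase j, fun i hi => ?_, (hT j hjT).1, (hT j hjT).2,
    fun i hi => (hT i (Finset.mem_of_mem_erase hi)).1, ?_⟩
  · obtain ⟨hij, hi⟩ := Finset.mem_erase.1 hi
    exact (hTS hi).resolve_left hij
  · have h1 := Finset.add_sum_erase T (fun i => r i ^ β) hjT
    have h2 : r j ^ β ≤ s ^ β := Real.rpow_le_rpow (hr j hj).le (hT j hjT).2 hβ.le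
    linarith

lemma choquetOn_mono_left {n : ℕ} {β : ℝ} {A B : Set (Rn n)} (h : A ⊆ B) (g : Rn n → ℝ≥0∞) :
    choquetOn (hContent n β) A g ≤ choquetOn (hContent n β) B g :=
  lintegral_mono fun _ => hContent_mono fun _ hx => ⟨h hx.1, hx.2⟩

lemma IsPacking.sum_choquetOn_le {n : ℕ} {β : ℝ} (hβ : 0 < β) {r : Rn n → ℝ}
    {T : Finset (Rn n)} (hT : IsPacking β r (T : Set (Rn n))) (hr : ∀ i ∈ T, 0 < r i)
    (hd : (T : Set (Rn n)).PairwiseDisjoint fun i => ball i (r i)) (U : Set (Rn n))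
    (g : Rn n → ℝ≥0∞) :
    ∑ i ∈ T, choquetOn (hContent n β) (ball i (r i) ∩ U) g ≤
      ENNReal.ofReal (packC n β) * choquetOn (hContent n β) U g := by
  simp only [choquetOn]
  rw [← lintegral_finsetSum _ fun i _ => (antitone_hContent_level _ g).measurable,
    ← lintegral_const_mul _ (antitone_hContent_level _ g).measurable]
  refine lintegral_mono fun t => ?_
  refine le_trans (Finset.sum_le_sum fun i _ => hContent_mono ?_)
    (hT.sum_hContent_inter_ball_le hβ hr hd _)
  rintro x ⟨⟨h1, h2⟩, h3⟩
  exact ⟨⟨h2, h3⟩, h1⟩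

/-- The weak-type `(1,1)` bound for the centered Hausdorff content maximal function. -/
lemma weak_type_maximal {n : ℕ} {β : ℝ} (hβ : 0 < β) (U : Set (Rn n)) (g : Rn n → ℝ≥0∞)
    {l : ℝ≥0∞} (hl0 : l ≠ 0) (hl : l ≠ ∞) :
    l * hContent n β {x | ∃ r > 0, l * (omegaC β * ENNReal.ofReal (r ^ β)) <
        choquetOn (hContent n β) (ball x r ∩ U) g} ≤
      ENNReal.ofReal (31 ^ β) * (ENNReal.ofReal (packC n β) * choquetOn (hContent n β) U g) := by
  classical
  set A := {x | ∃ r > 0, l * (omegaC β * ENNReal.ofReal (r ^ β)) <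
        choquetOn (hContent n β) (ball x r ∩ U) g} with hA
  set I := choquetOn (hContent n β) U g with hI
  have hc0 : ENNReal.ofReal (packC n β) ≠ 0 := by simpa using packC_pos
  have h31 : ENNReal.ofReal (31 ^ β) ≠ 0 := by
    simpa using Real.rpow_pos_of_pos (by norm_num : (0 : ℝ) < 31) β
  rcases eq_or_ne I ∞ with hItop | hItop
  · simp [hItop, ENNReal.mul_top, hc0, h31]
  have hω0 := omegaC_ne_zero hβ
  have hω : omegaC β ≠ ∞ := omegaC_ne_top
  have hlω0 : l * omegaC β ≠ 0 := mul_ne_zero hl0 hω0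
  have hlω : l * omegaC β ≠ ∞ := ENNReal.mul_ne_top hl hω
  have radius_le : ∀ {s : ℝ} {a : ℝ≥0∞}, 0 ≤ s → a ≠ ∞ →
      l * omegaC β * ENNReal.ofReal (s ^ β) ≤ a →
      s ≤ (a / (l * omegaC β)).toReal ^ β⁻¹ := by
    intro s a hs ha h
    rw [Real.le_rpow_inv_iff_of_pos hs ENNReal.toReal_nonneg hβ,
      ← ENNReal.ofReal_le_iff_le_toReal (ENNReal.div_ne_top ha hlω0),
      ENNReal.le_div_iff_mul_le (Or.inl hlω0) (Or.inl hlω), mul_comm]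
    exact h
  have hex : ∀ x, ∃ r : ℝ, x ∈ A → 0 < r ∧ l * (omegaC β * ENNReal.ofReal (r ^ β)) <
        choquetOn (hContent n β) (ball x r ∩ U) g := by
    intro x
    by_cases hx : x ∈ A
    · obtain ⟨r, h⟩ := hx
      exact ⟨r, fun _ => h⟩
    · exact ⟨0, fun h => (hx h).elim⟩
  choose r hr using hex
  obtain ⟨u, huA, hud, hu⟩ := Vitali.exists_disjoint_subfamily_covering_enlargement_closedBall
    A id r _ (fun a ha => radius_le (hr a ha).1.le hItop (by
      rw [mul_assoc]
      exact (hr a ha).2.le.trans (choquetOn_mono_left inter_subset_right _))) 5 (by norm_num)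
  have hud' : u.PairwiseDisjoint fun i => ball i (r i) := fun i hi j hj hij =>
    (hud hi hj hij).mono ball_subset_closedBall ball_subset_closedBall
  obtain ⟨S, hSu, hS, hsat⟩ := exists_isPacking hβ r u fun i hi => (hr i (huA hi)).1
  have hsum : ∀ T : Finset (Rn n), ↑T ⊆ S →
      l * omegaC β * ENNReal.ofReal (∑ i ∈ T, r i ^ β) ≤ ENNReal.ofReal (packC n β) * I := by
    intro T hTS
    have hTA : ∀ i ∈ T, i ∈ A := fun i hi => huA (hSu (hTS hi))
    rw [ENNReal.ofReal_sum_of_nonneg fun i hi => Real.rpow_nonneg (hr i (hTA i hi)).1.le _,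
      Finset.mul_sum]
    refine (Finset.sum_le_sum fun i hi => ?_).trans ((hS.mono hTS).sum_choquetOn_le hβ
      (fun i hi => (hr i (hTA i hi)).1) (hud'.subset (hTS.trans hSu)) U g)
    rw [mul_assoc]
    exact (hr i (hTA i hi)).2.le
  choose! y s T hTS hjy hjs hTy hTs using hsat
  have hs0 : ∀ j ∈ u, 0 < s j := fun j hj => (hr j (huA hj)).1.trans_le (hjs j hj)
  obtain ⟨v, hvu, hvd, hv⟩ := Vitali.exists_disjoint_subfamily_covering_enlargement_closedBall
    u y (fun j => 6 * s j) (6 * (ENNReal.ofReal (packC n β) * I / (l * omegaC β)).toReal ^ β⁻¹)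
    (fun j hj => by
      gcongr
      refine radius_le (hs0 j hj).le (ENNReal.mul_ne_top ENNReal.ofReal_ne_top hItop)
        (le_trans ?_ (hsum (T j) (hTS j hj)))
      gcongr
      exact hTs j hj) 5 (by norm_num)
  have hvc : v.Countable := hvd.countable_of_nonempty_interior fun j hj =>
    ⟨y j, ball_subset_interior_closedBall (mem_ball_self (by linarith [hs0 j (hvu hj)]))⟩
  have := hvc.to_subtype
  have hcover : A ⊆ ⋃ j : v, ball (y j) (31 * s j) := by
    intro x hx
    obtain ⟨b, hb, hxb⟩ := hu x hx
    obtain ⟨j, hj, hbj⟩ := hv b hb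
    have h1 : x ∈ closedBall (id b) (5 * r b) :=
      hxb (mem_closedBall_self (hr x hx).1.le)
    have h2 : x ∈ closedBall (y b) (6 * s b) := by
      have h3 : dist x b ≤ 5 * r b := h1
      rw [mem_closedBall]
      linarith [dist_triangle x b (y b), hjy b hb, hjs b hb]
    have h4 := hbj h2
    refine mem_iUnion.2 ⟨⟨j, hj⟩, ?_⟩
    rw [mem_closedBall] at h4
    rw [mem_ball]
    linarith [hs0 j (hvu hj)]
  have hTd : v.PairwiseDisjoint T := fun i hi j hj hij => by
    refine Finset.disjoint_left.2 fun a hai haj => ?_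
    exact Set.disjoint_left.1 (hvd hi hj hij)
      (mem_closedBall.2 ((hTy i (hvu hi) a hai).trans (by linarith [hs0 i (hvu hi)])))
      (mem_closedBall.2 ((hTy j (hvu hj) a haj).trans (by linarith [hs0 j (hvu hj)])))
  calc l * hContent n β A
      ≤ l * ∑' j : v, omegaC β * ENNReal.ofReal ((31 * s j) ^ β) := by
        gcongr
        exact hContent_le_tsum hβ _ _ hcover
    _ = ENNReal.ofReal (31 ^ β) * ∑' j : v, l * omegaC β * ENNReal.ofReal (s j ^ β) := by
        rw [← ENNReal.tsum_mul_left, ← ENNReal.tsum_mul_left]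
        congr 1 with j
        rw [Real.mul_rpow (by norm_num) (hs0 j (hvu j.2)).le, ENNReal.ofReal_mul (by positivity)]
        ring
    _ ≤ ENNReal.ofReal (31 ^ β) * (ENNReal.ofReal (packC n β) * I) := by
        gcongr
        rw [ENNReal.tsum_eq_iSup_sum]
        refine iSup_le fun W => ?_
        have hW : ((W.map (Function.Embedding.subtype _) : Finset (Rn n)) : Set (Rn n)) ⊆ v := by
          intro a ha
          simp only [Finset.coe_map, mem_image] at ha
          obtain ⟨b, _, rfl⟩ := ha
          exact b.2
        set W' := W.map (Function.Embedding.subtype _)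
        refine le_trans ?_ (hsum (W'.biUnion T) fun a ha => ?_)
        · rw [Finset.sum_biUnion (hTd.subset hW), ← Finset.mul_sum,
            ← ENNReal.ofReal_sum_of_nonneg fun (j : v) _ =>
              Real.rpow_nonneg (hs0 j (hvu j.2)).le _]
          gcongr
          rw [Finset.sum_map]
          exact Finset.sum_le_sum fun j _ => hTs j (hvu j.2)
        · obtain ⟨j, hj, ha⟩ := Finset.mem_biUnion.1 ha
          exact hTS j (hvu (hW hj)) ha

lemma choquetOn_mono {n : ℕ} {β : ℝ} (A : Set (Rn n)) {g h : Rn n → ℝ≥0∞} (hgh : g ≤ h) :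
    choquetOn (hContent n β) A g ≤ choquetOn (hContent n β) A h :=
  lintegral_mono fun _ => hContent_mono fun x hx => ⟨hx.1, hx.2.trans_le (hgh x)⟩

lemma choquetOn_le_inter_add_inter_compl {n : ℕ} {β : ℝ} (hβ : 0 < β) (A U : Set (Rn n))
    (g : Rn n → ℝ≥0∞) :
    choquetOn (hContent n β) A g ≤
      choquetOn (hContent n β) (A ∩ U) g + choquetOn (hContent n β) (A ∩ Uᶜ) g := by
  simp only [choquetOn]
  rw [← lintegral_add_left (antitone_hContent_level _ g).measurable]
  refine lintegral_mono fun t => (hContent_mono fun x hx => ?_).trans (hContent_union_le hβ _ _)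
  by_cases hxU : x ∈ U
  · exact Or.inl ⟨⟨hx.1, hxU⟩, hx.2⟩
  · exact Or.inr ⟨⟨hx.1, hxU⟩, hx.2⟩

lemma choquetOn_le_of_le {n : ℕ} {β : ℝ} (hβ : 0 < β) (A : Set (Rn n)) {g : Rn n → ℝ} {η : ℝ}
    (hg : ∀ x ∈ A, g x ≤ η) :
    choquetOn (hContent n β) A (fun x => ENNReal.ofReal (g x)) ≤
      ENNReal.ofReal η * hContent n β A := by
  calc choquetOn (hContent n β) A (fun x => ENNReal.ofReal (g x))
      ≤ ∫⁻ t in Ioi (0 : ℝ), (Iio η).indicator (fun _ => hContent n β A) t := by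
        refine lintegral_mono fun t => ?_
        by_cases ht : t < η
        · rw [indicator_of_mem (by exact ht)]
          exact hContent_mono fun x hx => hx.1
        · have : {x | x ∈ A ∧ ENNReal.ofReal t < ENNReal.ofReal (g x)} = ∅ := by
            refine eq_empty_of_forall_notMem fun x hx => hx.2.not_ge ?_
            exact ENNReal.ofReal_le_ofReal ((hg x hx.1).trans (not_lt.1 ht))
          rw [this, hContent_empty hβ]
          exact zero_le
    _ = ENNReal.ofReal η * hContent n β A := by
        rw [lintegral_indicator measurableSet_Iio, lintegral_const, Measure.restrict_restrict
          measurableSet_Iio, Measure.restrict_apply_univ, Iio_inter_Ioi, Real.volume_Ioo,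
          sub_zero, mul_comm]

lemma lintegral_Ioi_comp_div {a : ℝ} (ha : 0 < a) (G : ℝ → ℝ≥0∞) :
    ∫⁻ t in Ioi (0 : ℝ), G (t / a) = ENNReal.ofReal a * ∫⁻ t in Ioi (0 : ℝ), G t := by
  have him : (fun x => a * x) '' Ioi (0 : ℝ) = Ioi 0 := by
    rw [image_mul_left_Ioi ha, mul_zero]
  have h := lintegral_image_eq_lintegral_abs_deriv_mul (s := Ioi (0 : ℝ)) (f := fun x => a * x)
    (f' := fun _ => a) measurableSet_Ioi
    (fun x _ => by simpa using ((hasDerivAt_id x).const_mul a).hasDerivWithinAt)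
    (fun x _ y _ hxy => mul_left_cancel₀ ha.ne' hxy) (fun t => G (t / a))
  rw [him] at h
  rw [h, abs_of_pos ha, ← lintegral_const_mul' _ _ ENNReal.ofReal_ne_top]
  simp [mul_div_cancel_left₀ _ ha.ne']

/-- Absolute continuity of the Choquet integral of `|f| ^ p` with respect to the content. -/
lemma tendsto_choquetOn_zero {n : ℕ} {β p : ℝ} (hp : 0 < p) {f : Rn n → ℝ}
    (hf : choquet (hContent n β) (fun x => ENNReal.ofReal |f x| ^ p) < ∞) {U : ℕ → Set (Rn n)}
    (hU : Filter.Tendsto (fun k => hContent n β (U k)) Filter.atTop (nhds 0))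
    (hU1 : ∀ k, hContent n β (U k) ≤ 1) (m : ℝ) :
    Filter.Tendsto (fun k => choquetOn (hContent n β) (U k)
      (fun y => ENNReal.ofReal ((2 * max |f y| m) ^ p))) Filter.atTop (nhds 0) := by
  set G : ℝ → ℝ≥0∞ := fun t => hContent n β {x | ENNReal.ofReal t < ENNReal.ofReal |f x| ^ p}
  have h2 : (0 : ℝ) < 2 ^ p := Real.rpow_pos_of_pos two_pos p
  have key := tendsto_lintegral_of_dominated_convergence
    (μ := volume.restrict (Ioi (0 : ℝ)))
    (F := fun k t => hContent n β
      {y | y ∈ U k ∧ ENNReal.ofReal t < ENNReal.ofReal ((2 * max |f y| m) ^ p)}) (f := fun _ => 0)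
    (fun t => (Iic ((2 * m) ^ p)).indicator 1 t + G (t / 2 ^ p))
    (fun k => (antitone_hContent_level _ _).measurable)
    (fun k => (ae_restrict_iff' measurableSet_Ioi).2 (Filter.Eventually.of_forall
      fun t (ht : 0 < t) => ?_)) ?_ ?_
  · simpa [choquetOn] using key
  · by_cases htm : t ≤ (2 * m) ^ p
    · refine le_add_right ?_
      rw [indicator_of_mem (by exact htm)]
      exact (hContent_mono fun x hx => hx.1).trans (hU1 k)
    · refine le_add_left (hContent_mono fun x hx => ?_)
      have hlt : t < (2 * max |f x| m) ^ p :=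
        (ENNReal.ofReal_lt_ofReal_iff_of_nonneg ht.le).1 hx.2
      have hmax : m ≤ |f x| := by
        by_contra! h
        rw [max_eq_right h.le] at hlt
        exact htm hlt.le
      rw [max_eq_left hmax, Real.mul_rpow zero_le_two (abs_nonneg _)] at hlt
      change ENNReal.ofReal (t / 2 ^ p) < ENNReal.ofReal |f x| ^ p
      rw [ENNReal.ofReal_rpow_of_nonneg (abs_nonneg _) hp.le,
        ENNReal.ofReal_lt_ofReal_iff_of_nonneg (by positivity), div_lt_iff₀ h2, mul_comm]
      exact hlt
  · rw [lintegral_add_left (measurable_one.indicator measurableSet_Iic), lintegral_Ioi_comp_div h2]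
    refine ENNReal.add_ne_top.2 ⟨?_, ENNReal.mul_ne_top ENNReal.ofReal_ne_top hf.ne⟩
    rw [lintegral_indicator_one measurableSet_Iic, Measure.restrict_apply measurableSet_Iic,
      Iic_inter_Ioi]
    exact measure_Ioc_lt_top.ne
  · exact Filter.Eventually.of_forall fun t => tendsto_of_tendsto_of_tendsto_of_le_of_le
      tendsto_const_nhds hU (fun _ => zero_le) fun k => hContent_mono fun x hx => hx.1

lemma QuasiCont.exists_seq {n : ℕ} {β : ℝ} {f : Rn n → ℝ} (hf : QuasiCont (hContent n β) f) :
    ∃ U : ℕ → Set (Rn n), (∀ k, IsOpen (U k)) ∧ (∀ k, ContinuousOn f (U k)ᶜ) ∧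
      (∀ k, hContent n β (U k) ≤ 1) ∧
      Filter.Tendsto (fun k => hContent n β (U k)) Filter.atTop (nhds 0) := by
  choose U hUo hU hUc using fun k : ℕ => hf ((k : ℝ≥0∞) + 1)⁻¹ (by simp)
  refine ⟨U, hUo, hUc, fun k => (hU k).le.trans (by simp), ?_⟩
  refine tendsto_of_tendsto_of_tendsto_of_le_of_le tendsto_const_nhds
    ((ENNReal.tendsto_inv_nat_nhds_zero).comp (Filter.tendsto_add_atTop_nat 1))
    (fun _ => zero_le) fun k => ?_
  simpa using (hU k).le

lemma omegaC_mul_ne_zero {β r : ℝ} (hβ : 0 < β) (hr : 0 < r) :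
    omegaC β * ENNReal.ofReal (r ^ β) ≠ 0 :=
  mul_ne_zero (omegaC_ne_zero hβ) (by simpa using Real.rpow_pos_of_pos hr β)

lemma omegaC_mul_ne_top {β r : ℝ} : omegaC β * ENNReal.ofReal (r ^ β) ≠ ∞ :=
  ENNReal.mul_ne_top omegaC_ne_top ENNReal.ofReal_ne_top

lemma hContent_setOf_not_eventually_le {n : ℕ} {β p : ℝ} (hβ : 0 < β) (hp : 0 < p)
    {f : Rn n → ℝ} (hf : MemChoquetLp (hContent n β) p f) (m : ℝ) {δ : ℝ≥0∞}
    (hδ0 : δ ≠ 0) (hδ : δ ≠ ∞) :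
    hContent n β {x | |f x| ≤ m ∧ ¬ ∀ᶠ r in nhdsWithin (0 : ℝ) (Ioi 0),
      (omegaC β * ENNReal.ofReal (r ^ β))⁻¹ * choquetOn (hContent n β) (ball x r)
        (fun y => ENNReal.ofReal (|f y - f x| ^ p)) ≤ δ + δ} = 0 := by
  obtain ⟨U, -, hUc, hU1, hU⟩ := hf.1.exists_seq
  set h : Rn n → ℝ≥0∞ := fun y => ENNReal.ofReal ((2 * max |f y| m) ^ p)
  have hI := tendsto_choquetOn_zero hp hf.2 hU hU1 m
  have hlim := hU.add (ENNReal.Tendsto.const_mul (a := δ⁻¹) (ENNReal.Tendsto.const_mul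
    (a := ENNReal.ofReal (31 ^ β)) (ENNReal.Tendsto.const_mul (a := ENNReal.ofReal (packC n β)) hI
      (Or.inr ENNReal.ofReal_ne_top)) (Or.inr ENNReal.ofReal_ne_top))
      (Or.inr (ENNReal.inv_ne_top.2 hδ0)))
  simp only [mul_zero, add_zero] at hlim
  refine le_antisymm (ge_of_tendsto' hlim fun k => ?_) zero_le
  refine (hContent_mono (b := U k ∪ {x | ∃ r > 0, δ * (omegaC β * ENNReal.ofReal (r ^ β)) <
      choquetOn (hContent n β) (ball x r ∩ U k) h}) ?_).trans
    ((hContent_union_le hβ _ _).trans (add_le_add_right ?_ _))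
  swap
  · rw [← ENNReal.div_eq_inv_mul, ENNReal.le_div_iff_mul_le (Or.inl hδ0) (Or.inl hδ), mul_comm]
    exact weak_type_maximal hβ (U k) h hδ0 hδ
  rintro x ⟨hxm, hx⟩
  by_contra hxU
  simp only [mem_union, mem_ofPred_eq, not_or, not_exists, not_and, not_lt] at hxU
  obtain ⟨hxU, hxA⟩ := hxU
  refine hx ?_
  have hδr : 0 < δ.toReal := ENNReal.toReal_pos hδ0 hδ
  have hcont : ContinuousWithinAt (fun y => |f y - f x| ^ p) (U k)ᶜ x :=
    (((hUc k x hxU).sub continuousWithinAt_const).abs).rpow_const (Or.inr hp.le)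
  have hev := hcont.tendsto.eventually_lt_const (u := δ.toReal) (by
    simpa [Real.zero_rpow hp.ne'] using hδr)
  obtain ⟨ε, hε, hball⟩ := Metric.mem_nhdsWithin_iff.1 hev
  filter_upwards [Ioo_mem_nhdsGT hε] with r hr
  rw [← ENNReal.div_eq_inv_mul, ENNReal.div_le_iff (omegaC_mul_ne_zero hβ hr.1) omegaC_mul_ne_top,
    add_mul]
  refine (choquetOn_le_inter_add_inter_compl hβ _ (U k) _).trans (add_le_add ?_ ?_)
  · refine (choquetOn_mono _ fun y => ENNReal.ofReal_le_ofReal ?_).trans (hxA r hr.1)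
    refine Real.rpow_le_rpow (abs_nonneg _) ?_ hp.le
    linarith [abs_sub (f y) (f x), le_max_left |f y| m, le_max_right |f y| m]
  · refine (choquetOn_le_of_le hβ _ (η := δ.toReal) fun y hy => ?_).trans ?_
    · exact le_of_lt (hball ⟨ball_subset_ball hr.2.le hy.1, hy.2⟩)
    · rw [ENNReal.ofReal_toReal hδ]
      gcongr
      exact (hContent_mono inter_subset_left).trans (hContent_ball_le hβ _ _)

lemma exists_null_forall_tendsto_choquetOn {n : ℕ} {β p : ℝ} (hβ : 0 < β) (hp : 0 < p)
    {f : Rn n → ℝ} (hf : MemChoquetLp (hContent n β) p f) :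
    ∃ S : Set (Rn n), hContent n β S = 0 ∧ ∀ x ∉ S, Filter.Tendsto
      (fun r : ℝ => (omegaC β * ENNReal.ofReal (r ^ β))⁻¹ *
        choquetOn (hContent n β) (ball x r) (fun y => ENNReal.ofReal (|f y - f x| ^ p)))
      (nhdsWithin 0 (Ioi 0)) (nhds 0) := by
  refine ⟨⋃ q : ℕ × ℕ, _, le_antisymm ((hContent_iUnion_le hβ _).trans_eq
    (ENNReal.tsum_eq_zero.2 fun q => hContent_setOf_not_eventually_le hβ hp hf
      q.1 (δ := ((q.2 : ℝ≥0∞) + 1)⁻¹) (by simp) (by simp))) zero_le, ?_⟩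
  intro x hx
  simp only [mem_iUnion, mem_ofPred_eq, not_exists, not_and, not_not] at hx
  refine ENNReal.tendsto_nhds_zero.2 fun ε hε => ?_
  obtain ⟨m, hm⟩ := exists_nat_ge |f x|
  obtain ⟨d, hd⟩ := ENNReal.exists_inv_nat_lt (ENNReal.half_pos hε.ne').ne'
  filter_upwards [hx (m, d) hm] with r hr
  refine hr.trans ?_
  have : ((d : ℝ≥0∞) + 1)⁻¹ ≤ ε / 2 := (ENNReal.inv_le_inv.2 le_self_add).trans hd.le
  exact (add_le_add this this).trans_eq (ENNReal.add_halves ε)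

lemma omegaC_mul_volume_le {n : ℕ} {β : ℝ} (hβ : 0 < β) (hβn : β ≤ n) {x : Rn n} {r : ℝ}
    (hr : 0 < r) {E : Set (Rn n)} (hE : E ⊆ ball x r) :
    omegaC β * volume E ≤
      volume (ball (0 : Rn n) 1) * ENNReal.ofReal (r ^ (n - β)) * hContent n β E := by
  set v := volume (ball (0 : Rn n) 1)
  have hc0 : v * ENNReal.ofReal (r ^ (n - β)) ≠ 0 :=
    mul_ne_zero (measure_ball_pos _ _ one_pos).ne' (by simpa using Real.rpow_pos_of_pos hr _)
  have hc : v * ENNReal.ofReal (r ^ (n - β)) ≠ ∞ :=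
    ENNReal.mul_ne_top measure_ball_lt_top.ne ENNReal.ofReal_ne_top
  rw [hContent, ENNReal.mul_iInf_of_ne hc0 hc]
  refine le_iInf fun c => ?_
  rw [ENNReal.mul_iInf_of_ne hc0 hc]
  refine le_iInf fun hcE => ?_
  rw [← ENNReal.tsum_mul_left]
  calc omegaC β * volume E
      ≤ omegaC β * ∑' k, volume (ball (c k).1 (c k).2 ∩ ball x r) := by
        gcongr
        refine (measure_mono fun y hy => ?_).trans (measure_iUnion_le _)
        rw [← iUnion_inter]
        exact ⟨hcE hy, hE hy⟩
    _ = ∑' k, omegaC β * volume (ball (c k).1 (c k).2 ∩ ball x r) := ENNReal.tsum_mul_left.symm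
    _ ≤ _ := ENNReal.tsum_le_tsum fun k => ?_
  rcases le_or_gt (c k).2 0 with hs | hs
  · simp [ball_eq_empty.2 hs]
  set s := (c k).2
  have hmin : 0 < min s r := lt_min hs hr
  have hball : volume (ball (c k).1 s ∩ ball x r) ≤ ENNReal.ofReal (min s r ^ n) * v := by
    rcases min_choice s r with h | h <;> rw [h]
    · refine (measure_mono inter_subset_left).trans_eq ?_
      rw [Measure.addHaar_ball_of_pos _ _ hs, finrank_euclideanSpace_fin]
    · refine (measure_mono inter_subset_right).trans_eq ?_
      rw [Measure.addHaar_ball_of_pos _ _ hr, finrank_euclideanSpace_fin]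
  have hpow : min s r ^ n ≤ r ^ (n - β) * s ^ β := by
    calc min s r ^ n = min s r ^ (n - β) * min s r ^ β := by
          rw [← Real.rpow_add hmin, sub_add_cancel, Real.rpow_natCast]
      _ ≤ r ^ (n - β) * s ^ β := by
          gcongr
          · exact min_le_right _ _
          · exact min_le_left _ _
  calc omegaC β * volume (ball (c k).1 s ∩ ball x r)
      ≤ omegaC β * (ENNReal.ofReal (r ^ (n - β) * s ^ β) * v) := by
        gcongr
        exact hball.trans (by gcongr)
    _ = v * ENNReal.ofReal (r ^ (n - β)) * (omegaC β * ENNReal.ofReal (s ^ β)) := by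
        rw [ENNReal.ofReal_mul (by positivity)]
        ring

lemma volume_eq_zero_of_hContent_eq_zero {n : ℕ} {β : ℝ} (hβ : 0 < β) (hβn : β ≤ n)
    {E : Set (Rn n)} (hE : hContent n β E = 0) : volume E = 0 := by
  have hcov : E ⊆ ⋃ k : ℕ, E ∩ ball 0 (k + 1) := fun x hx => by
    obtain ⟨k, hk⟩ := exists_nat_ge ‖x‖
    exact mem_iUnion.2 ⟨k, hx, by rw [mem_ball_zero_iff]; linarith⟩
  refine measure_mono_null hcov (measure_iUnion_null fun k => ?_)
  have h0 : hContent n β (E ∩ ball 0 (k + 1)) = 0 :=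
    le_antisymm ((hContent_mono inter_subset_left).trans hE.le) zero_le
  have h := omegaC_mul_volume_le hβ hβn (x := 0) (r := (k : ℝ) + 1) (by positivity)
    (E := E ∩ ball 0 (k + 1)) inter_subset_right
  rw [h0, mul_zero] at h
  exact (mul_eq_zero.1 (le_antisymm h zero_le)).resolve_left (omegaC_ne_zero hβ)

lemma QuasiCont.aestronglyMeasurable {n : ℕ} {β : ℝ} (hβ : 0 < β) (hβn : β ≤ n) {f : Rn n → ℝ}
    (hf : QuasiCont (hContent n β) f) : AEStronglyMeasurable f volume := by
  obtain ⟨U, hUo, hUc, -, hU⟩ := hf.exists_seq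
  have h1 : AEStronglyMeasurable f (volume.restrict (⋃ k, (U k)ᶜ)) :=
    aestronglyMeasurable_iUnion_iff.2 fun k =>
      (hUc k).aestronglyMeasurable (hUo k).measurableSet.compl
  have h2 : volume (⋃ k, (U k)ᶜ)ᶜ = 0 := by
    refine volume_eq_zero_of_hContent_eq_zero hβ hβn
      (le_antisymm (ge_of_tendsto' hU fun k => hContent_mono ?_) zero_le)
    rw [compl_iUnion]
    simpa using iInter_subset U k
  rwa [Measure.restrict_eq_self_of_ae_mem (by rwa [ae_iff])] at h1

lemma setLIntegral_le_choquetOn {n : ℕ} {β : ℝ} (hβ : 0 < β) (hβn : β ≤ n) {g : Rn n → ℝ}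
    (hg : AEMeasurable g volume) (hg0 : 0 ≤ g) (x : Rn n) {r : ℝ} (hr : 0 < r) :
    ∫⁻ y in ball x r, ENNReal.ofReal (g y) ≤ volume (ball x r) *
      ((omegaC β * ENNReal.ofReal (r ^ β))⁻¹ *
        choquetOn (hContent n β) (ball x r) (fun y => ENNReal.ofReal (g y))) := by
  set v := volume (ball (0 : Rn n) 1)
  have hω0 := omegaC_ne_zero hβ
  have hω : omegaC β ≠ ∞ := omegaC_ne_top
  set I := choquetOn (hContent n β) (ball x r) (fun y => ENNReal.ofReal (g y)) with hI
  have h1 : omegaC β * ∫⁻ y in ball x r, ENNReal.ofReal (g y) ≤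
      v * ENNReal.ofReal (r ^ (n - β)) * I := by
    rw [lintegral_eq_lintegral_meas_lt _ (Filter.Eventually.of_forall hg0) hg.restrict, hI,
      choquetOn, ← lintegral_const_mul' _ _ hω,
      ← lintegral_const_mul _ (antitone_hContent_level _ _).measurable]
    refine setLIntegral_mono' measurableSet_Ioi fun t (ht : 0 < t) => ?_
    rw [Measure.restrict_apply' measurableSet_ball]
    have hset : {y | y ∈ ball x r ∧ ENNReal.ofReal t < ENNReal.ofReal (g y)} =
        {y | t < g y} ∩ ball x r := by
      ext y
      simp [ENNReal.ofReal_lt_ofReal_iff_of_nonneg ht.le, and_comm]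
    rw [hset]
    exact omegaC_mul_volume_le hβ hβn hr inter_subset_right
  have hpow : volume (ball x r) = v * ENNReal.ofReal (r ^ (n - β)) * ENNReal.ofReal (r ^ β) := by
    rw [Measure.addHaar_ball_of_pos _ _ hr, finrank_euclideanSpace_fin, mul_assoc,
      ← ENNReal.ofReal_mul (by positivity), ← Real.rpow_add hr, sub_add_cancel,
      Real.rpow_natCast, mul_comm]
  have hr0 : ENNReal.ofReal (r ^ β) ≠ 0 := by simpa using Real.rpow_pos_of_pos hr β
  have h2 : volume (ball x r) * ((omegaC β * ENNReal.ofReal (r ^ β))⁻¹ * I) =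
      v * ENNReal.ofReal (r ^ (n - β)) * I / omegaC β := by
    rw [hpow, ENNReal.mul_inv (Or.inl hω0) (Or.inl hω), div_eq_mul_inv]
    calc _ = v * ENNReal.ofReal (r ^ (n - β)) * I * (omegaC β)⁻¹ *
          (ENNReal.ofReal (r ^ β) * (ENNReal.ofReal (r ^ β))⁻¹) := by ring
      _ = _ := by rw [ENNReal.mul_inv_cancel hr0 ENNReal.ofReal_ne_top, mul_one]
  rw [h2, ENNReal.le_div_iff_mul_le (Or.inl hω0) (Or.inl hω), mul_comm]
  exact h1

lemma abs_le_add_rpow {p ε : ℝ} (hp : 1 ≤ p) (hε : 0 < ε) (a : ℝ) :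
    |a| ≤ ε + ε ^ (1 - p) * |a| ^ p := by
  rcases le_or_gt |a| ε with h | h
  · exact h.trans (le_add_of_nonneg_right (by positivity))
  · have ha : 0 < |a| := hε.trans h
    have : |a| ^ (1 - p) ≤ ε ^ (1 - p) := Real.rpow_le_rpow_of_nonpos hε h.le (by linarith)
    calc |a| = |a| ^ (1 - p) * |a| ^ p := by
          rw [← Real.rpow_add ha, sub_add_cancel, Real.rpow_one]
      _ ≤ ε ^ (1 - p) * |a| ^ p := by gcongr
      _ ≤ ε + ε ^ (1 - p) * |a| ^ p := le_add_of_nonneg_left hε.le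

lemma tendsto_setAverage_of_tendsto_choquetOn {n : ℕ} {β p : ℝ} (hβ : 0 < β) (hβn : β ≤ n)
    (hp : 1 ≤ p) {f : Rn n → ℝ} (hf : AEStronglyMeasurable f volume) {x : Rn n} {L : ℝ}
    (h : Filter.Tendsto (fun r : ℝ => (omegaC β * ENNReal.ofReal (r ^ β))⁻¹ *
        choquetOn (hContent n β) (ball x r) (fun y => ENNReal.ofReal (|f y - L| ^ p)))
      (nhdsWithin 0 (Ioi 0)) (nhds 0)) :
    Filter.Tendsto (fun r : ℝ => ⨍ y in ball x r, f y) (nhdsWithin 0 (Ioi 0)) (nhds L) := by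
  refine Metric.nhds_basis_closedBall.tendsto_right_iff.2 fun ε hε => ?_
  have hε2 : 0 < ε / 2 := half_pos hε
  have hc : 0 < (ε / 2) ^ (1 - p) := Real.rpow_pos_of_pos hε2 _
  filter_upwards [self_mem_nhdsWithin, ENNReal.tendsto_nhds_zero.1 h
    (ENNReal.ofReal (ε / 2 / (ε / 2) ^ (1 - p))) (by simpa using by positivity)] with r hr hrε
  replace hr : 0 < r := hr
  have hv0 : volume (ball x r) ≠ 0 := (measure_ball_pos _ _ hr).ne'
  have hv : volume (ball x r) ≠ ∞ := measure_ball_lt_top.ne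
  have hmeas : AEStronglyMeasurable (fun y => f y - L) volume := hf.sub aestronglyMeasurable_const
  have hpm : AEMeasurable (fun y => |f y - L| ^ p) volume :=
    (continuous_abs.measurable.comp_aemeasurable hmeas.aemeasurable).pow_const p
  have hbound : ∫⁻ y in ball x r, ENNReal.ofReal ‖f y - L‖ ≤
      volume (ball x r) * ENNReal.ofReal ε := by
    calc ∫⁻ y in ball x r, ENNReal.ofReal ‖f y - L‖
        ≤ ∫⁻ y in ball x r, (ENNReal.ofReal (ε / 2) +
            ENNReal.ofReal ((ε / 2) ^ (1 - p)) * ENNReal.ofReal (|f y - L| ^ p)) := by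
          refine lintegral_mono fun y => ?_
          rw [← ENNReal.ofReal_mul hc.le, ← ENNReal.ofReal_add hε2.le (by positivity)]
          exact ENNReal.ofReal_le_ofReal (abs_le_add_rpow hp hε2 _)
      _ = ENNReal.ofReal (ε / 2) * volume (ball x r) + ENNReal.ofReal ((ε / 2) ^ (1 - p)) *
            ∫⁻ y in ball x r, ENNReal.ofReal (|f y - L| ^ p) := by
          rw [lintegral_add_left measurable_const, setLIntegral_const,
            lintegral_const_mul' _ _ ENNReal.ofReal_ne_top]
      _ ≤ ENNReal.ofReal (ε / 2) * volume (ball x r) + ENNReal.ofReal ((ε / 2) ^ (1 - p)) *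
            (volume (ball x r) * ENNReal.ofReal (ε / 2 / (ε / 2) ^ (1 - p))) := by
          gcongr
          refine (setLIntegral_le_choquetOn hβ hβn hpm (fun y => by positivity) x hr).trans ?_
          gcongr
      _ = volume (ball x r) * ENNReal.ofReal ε := by
          rw [mul_left_comm, ← ENNReal.ofReal_mul hc.le, mul_div_cancel₀ _ hc.ne', mul_comm,
            ← mul_add, ← ENNReal.ofReal_add hε2.le hε2.le, add_halves]
  have hfin : volume (ball x r) * ENNReal.ofReal ε ≠ ∞ :=
    ENNReal.mul_ne_top hv ENNReal.ofReal_ne_top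
  have hsub : IntegrableOn (fun y => f y - L) (ball x r) :=
    ⟨hmeas.restrict, (hasFiniteIntegral_iff_norm _).2 (hbound.trans_lt hfin.lt_top)⟩
  have hLint : IntegrableOn (fun _ : Rn n => L) (ball x r) := integrableOn_const hv
  have hfint : IntegrableOn f (ball x r) := by
    simpa [Pi.add_def] using hsub.add hLint
  have hvr : 0 < volume.real (ball x r) := ENNReal.toReal_pos hv0 hv
  have hnorm : ‖∫ y in ball x r, (f y - L)‖ ≤ volume.real (ball x r) * ε := by
    refine (norm_integral_le_lintegral_norm _).trans ?_
    refine (ENNReal.toReal_mono hfin hbound).trans_eq ?_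
    rw [ENNReal.toReal_mul, ENNReal.toReal_ofReal hε.le, Measure.real]
  have havg : (⨍ y in ball x r, f y) - L =
      (volume.real (ball x r))⁻¹ * ∫ y in ball x r, (f y - L) := by
    rw [setAverage_eq, integral_sub hfint hLint, setIntegral_const, smul_eq_mul, smul_eq_mul,
      mul_sub, inv_mul_cancel_left₀ hvr.ne']
  rw [mem_closedBall, Real.dist_eq, havg, abs_mul, abs_of_pos (inv_pos.2 hvr),
    inv_mul_le_iff₀ hvr]
  exact hnorm

/-- Lebesgue differentiation theorem in `L^p(H^β_∞)`: for `H^β`-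
almost every `x`, the precise representative `f*(x)` exists as the limit of the
volume averages, and the Choquet `p`-averages of `|f - f*(x)|` over `B(x,r)`,
normalized by `ω_β r^β`, tend to `0` as `r → 0`. -/
theorem statement18 (n : ℕ) (β p : ℝ) (hβ0 : 0 < β) (hβn : β < n) (hp : 1 ≤ p)
    (f : Rn n → ℝ) (hf : MemChoquetLp (hContent n β) p f) :
    ∃ S : Set (Rn n), hContent n β S = 0 ∧ ∀ x ∉ S, ∃ L : ℝ,
      Filter.Tendsto (fun r : ℝ => ⨍ y in ball x r, f y) (nhdsWithin 0 (Ioi 0)) (nhds L) ∧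
      Filter.Tendsto
        (fun r : ℝ => (omegaC β * ENNReal.ofReal (r ^ β))⁻¹ *
          choquetOn (hContent n β) (ball x r)
            (fun y => ENNReal.ofReal (|f y - L| ^ p)))
        (nhdsWithin 0 (Ioi 0)) (nhds 0) := by
  obtain ⟨S, hS, h⟩ := exists_null_forall_tendsto_choquetOn hβ0 (one_pos.trans_le hp) hf
  exact ⟨S, hS, fun x hx => ⟨f x, tendsto_setAverage_of_tendsto_choquetOn hβ0 hβn.le hp
    (hf.1.aestronglyMeasurable hβ0 hβn.le) (h x hx), h x hx⟩⟩

end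
end
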